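/- arXiv:2104.02325 — 2 statements merged into one kernel-verified Lean document; each statement's English description precedes it below -/
import Mathlib

section
/- Let Δ be the bicyclic graph built as follows: take two vertices u and v joined by three internally disjoint paths P₁: v–a–e₁–b–u, P₂: u–d–e₂–c–v, and P₃ of length ℓ ≥ 1; attach rooted trees T₁, T₂, T₃, T₄ at a, b, c, d respectively, rooted trees Θ₅, Θ₆ at e₁, e₂, and rooted trees Υ₁, Υ₂ at u, v; no trees are attached at internal vertices of P₃. Assume T₁, T₂, T₃, T₄ are pairwise isomorphic as rooted trees, Θ₅ ≅ Θ₆ as rooted trees, and Υ₁ ≅ Υ₂ as rooted trees; set D = Aut(T₁)_{root}, H = Aut(Θ₅)_{root}, K = Aut(Υ₁)_{root}. Assume further that ℓ ≠ 4 or at least one of T₁, Θ₅ has more than one vertex (so no automorphism can carry P₃ onto P₁ or P₂). Then Aut(Δ) ≅ (D⁴ × H² × K²) ⋊ (Z₂ × Z₂), where the generator a of Z₂ × Z₂ (induced by exchanging P₁ and P₂ while fixing u and v) sends (d₁,d₂,d₃,d₄,h₁,h₂,k₁,k₂) to (d₃,d₄,d₁,d₂,h₂,h₁,k₁,k₂),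 and the generator b (induced by the reflection exchanging u and v while preserving each path setwise) sends it to (d₂,d₁,d₄,d₃,h₁,h₂,k₂,k₁). -/
open SimpleGraph

/-- The stabilizer `Aut(G)_v = {f ∈ Aut(G) : f(v) = v}` of a vertex `v` in the automorphism
group of a graph `G`. -/
def autStab {V : Type} (G : SimpleGraph V) (v : V) : Subgroup (G ≃g G) where
  carrier := {f | f v = v}
  one_mem' := rfl
  mul_mem' := by
    intro f g hf hg
    simp only [Set.mem_setOf_eq] at *
    show f (g v) = v
    rw [hg, hf]
  inv_mem' := by
    intro f hf
    simp only [Set.mem_setOf_eq] at *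
    calc f⁻¹ v = f⁻¹ (f v) := by rw [hf]
    _ = v := RelIso.inv_apply_self f v

/-- The automorphism of `ι → G` given by permuting coordinates by `σ`. -/
def permAut {ι G : Type} [Group G] (σ : Equiv.Perm ι) : MulAut (ι → G) where
  toFun f := f ∘ σ.symm
  invFun f := f ∘ σ
  left_inv f := by funext i; simp
  right_inv f := by funext i; simp
  map_mul' f g := rfl

/-- The action of `Equiv.Perm ι` on `ι → G` by permuting coordinates, as a homomorphism. -/
def permHom (ι G : Type) [Group G] : Equiv.Perm ι →* MulAut (ι → G) where
  toFun := permAut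
  map_one' := by ext f i; rfl
  map_mul' σ τ := by ext f i; rfl

/-- Combine two actions-by-automorphisms into one on the direct product. -/
def autProdHom {Q M N : Type} [Group Q] [Group M] [Group N]
    (φ : Q →* MulAut M) (ψ : Q →* MulAut N) : Q →* MulAut (M × N) where
  toFun q := (φ q).prodCongr (ψ q)
  map_one' := by
    show MulEquiv.prodCongr (φ 1) (ψ 1) = 1
    rw [map_one, map_one]; ext x <;> rfl
  map_mul' a b := by
    show MulEquiv.prodCongr (φ (a * b)) (ψ (a * b)) = _
    rw [map_mul, map_mul]; ext x <;> rfl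

/-- The translation action of an additive group on itself, as permutations. -/
def transPermHom (A : Type) [AddGroup A] : Multiplicative A →* Equiv.Perm A :=
  MulAction.toPermHom (Multiplicative A) A

/-- The action of (the multiplicative version of) an additive group `A` on `A → G`
by translating the coordinates. -/
def transAutHom (A G : Type) [AddGroup A] [Group G] : Multiplicative A →* MulAut (A → G) :=
  (permHom A G).comp (transPermHom A)

/-- The Klein four-group `Z₂ × Z₂` (written multiplicatively). -/
abbrev K4 : Type := Multiplicative (ZMod 2 × ZMod 2)

/-- Projection of the Klein four-group onto its first `Z₂` factor. -/
def fstK : K4 →* Multiplicative (ZMod 2) :=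
  AddMonoidHom.toMultiplicative (AddMonoidHom.fst (ZMod 2) (ZMod 2))

/-- Projection of the Klein four-group onto its second `Z₂` factor. -/
def sndK : K4 →* Multiplicative (ZMod 2) :=
  AddMonoidHom.toMultiplicative (AddMonoidHom.snd (ZMod 2) (ZMod 2))

/-- The action of `Z₂ × Z₂` on `D⁴ × H² × K²` in which the generator `a = (1,0)` sends
`(d₁,d₂,d₃,d₄,h₁,h₂,k₁,k₂)` to `(d₃,d₄,d₁,d₂,h₂,h₁,k₁,k₂)` and the generator `b = (0,1)` sends
it to `(d₂,d₁,d₄,d₃,h₁,h₂,k₂,k₁)`: the four `D`-coordinates are indexed by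
`(0,0), (0,1), (1,0), (1,1) : Z₂ × Z₂` and translated, and the pairs of `H`- resp.
`K`-coordinates are indexed by `Z₂` and translated by the first resp. second component. -/
def B2act (D H K : Type) [Group D] [Group H] [Group K] :
    K4 →* MulAut ((ZMod 2 × ZMod 2 → D) × (ZMod 2 → H) × (ZMod 2 → K)) :=
  autProdHom (transAutHom (ZMod 2 × ZMod 2) D)
    (autProdHom ((transAutHom (ZMod 2) H).comp fstK) ((transAutHom (ZMod 2) K).comp sndK))

/-- The group `(D⁴ × H² × K²) ⋊ (Z₂ × Z₂)` appearing in the class `𝓑₂`. -/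
def B2group (D H K : Type) [Group D] [Group H] [Group K] : Type :=
  ((ZMod 2 × ZMod 2 → D) × (ZMod 2 → H) × (ZMod 2 → K)) ⋊[B2act D H K] K4

instance (D H K : Type) [Group D] [Group H] [Group K] : Group (B2group D H K) :=
  inferInstanceAs (Group (_ ⋊[B2act D H K] K4))

/-- The graph obtained from `base` by attaching, for each `i : ι`, the rooted tree
`(T i, t i)` at the vertex `x i` (identifying the root `t i` with `x i`); the attached trees
are pairwise disjoint and disjoint from `base` except at the attachment vertices. -/
def attachTrees {B : Type} (base : SimpleGraph B) {ι : Type} {W : ι → Type}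
    (T : ∀ i, SimpleGraph (W i)) (t : ∀ i, W i) (x : ι → B) :
    SimpleGraph (B ⊕ Σ i, {w : W i // w ≠ t i}) where
  Adj a b :=
    match a, b with
    | .inl a, .inl b => base.Adj a b
    | .inl a, .inr ⟨i, w⟩ => a = x i ∧ (T i).Adj (t i) w.1
    | .inr ⟨i, w⟩, .inl b => b = x i ∧ (T i).Adj (t i) w.1
    | .inr ⟨i, w⟩, .inr ⟨j, w'⟩ => ∃ h : i = j, (T j).Adj (h ▸ w).1 w'.1
  symm := by
    constructor
    rintro (a | ⟨i, w⟩) (b | ⟨j, w'⟩) h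
    · exact base.adj_symm h
    · exact h
    · exact h
    · obtain ⟨rfl, hw⟩ := h
      exact ⟨rfl, (T i).adj_symm hw⟩
  loopless := by
    constructor
    rintro (a | ⟨i, w⟩) h
    · exact base.loopless.irrefl a h
    · obtain ⟨h', hw⟩ := h
      exact (T i).loopless.irrefl _ hw

/-- Vertices of a theta graph: two hub vertices `u`, `v` joined by three internally disjoint
paths having `p`, `q` and `r` internal vertices respectively. -/
inductive ThetaV (p q r : ℕ) : Type where
  | u : ThetaV p q r
  | v : ThetaV p q r
  | x1 : Fin p → ThetaV p q r
  | x2 : Fin q → ThetaV p q r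
  | x3 : Fin r → ThetaV p q r
  deriving DecidableEq

/-- The theta graph: the vertices `u` and `v` joined by three internally disjoint paths of
lengths `p + 1`, `q + 1` and `r + 1`; the internal vertices of each path are indexed starting
from the end adjacent to `v`. -/
def theta (p q r : ℕ) : SimpleGraph (ThetaV p q r) where
  Adj a b :=
    match a, b with
    | .u, .v => p = 0 ∨ q = 0 ∨ r = 0
    | .v, .u => p = 0 ∨ q = 0 ∨ r = 0
    | .v, .x1 i => i.val = 0
    | .x1 i, .v => i.val = 0
    | .u, .x1 i => i.val = p - 1
    | .x1 i, .u => i.val = p - 1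
    | .v, .x2 i => i.val = 0
    | .x2 i, .v => i.val = 0
    | .u, .x2 i => i.val = q - 1
    | .x2 i, .u => i.val = q - 1
    | .v, .x3 i => i.val = 0
    | .x3 i, .v => i.val = 0
    | .u, .x3 i => i.val = r - 1
    | .x3 i, .u => i.val = r - 1
    | .x1 i, .x1 j => i.val + 1 = j.val ∨ j.val + 1 = i.val
    | .x2 i, .x2 j => i.val + 1 = j.val ∨ j.val + 1 = i.val
    | .x3 i, .x3 j => i.val + 1 = j.val ∨ j.val + 1 = i.val
    | _, _ => False
  symm := by
    constructor
    intro a b h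
    cases a <;> cases b <;> simp only [] at h ⊢ <;> tauto
  loopless := by
    constructor
    intro a h
    cases a <;> simp only [] at h <;> omega

/-- Index type for the eight trees attached in the construction of Lemma 2.2:
four trees `T₁, T₂, T₃, T₄`, two trees `Θ₅, Θ₆`, and two trees `Υ₁, Υ₂`. -/
abbrev Stmt2Index : Type := Fin 4 ⊕ Fin 2 ⊕ Fin 2

/-- The family of vertex types of the eight attached trees. -/
def stmt2W (WT : Fin 4 → Type) (WΘ WΥ : Fin 2 → Type) : Stmt2Index → Type :=
  fun i =>
    match i with
    | .inl j => WT j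
    | .inr (.inl j) => WΘ j
    | .inr (.inr j) => WΥ j

/-- The family of the eight attached trees. -/
def stmt2T {WT : Fin 4 → Type} {WΘ WΥ : Fin 2 → Type}
    (TT : ∀ j, SimpleGraph (WT j)) (TΘ : ∀ j, SimpleGraph (WΘ j))
    (TΥ : ∀ j, SimpleGraph (WΥ j)) :
    ∀ i, SimpleGraph (stmt2W WT WΘ WΥ i) :=
  fun i =>
    match i with
    | .inl j => TT j
    | .inr (.inl j) => TΘ j
    | .inr (.inr j) => TΥ j

/-- The family of roots of the eight attached trees. -/
def stmt2root {WT : Fin 4 → Type} {WΘ WΥ : Fin 2 → Type}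
    (tT : ∀ j, WT j) (tΘ : ∀ j, WΘ j) (tΥ : ∀ j, WΥ j) :
    ∀ i, stmt2W WT WΘ WΥ i :=
  fun i =>
    match i with
    | .inl j => tT j
    | .inr (.inl j) => tΘ j
    | .inr (.inr j) => tΥ j

/-- Attachment vertices on the theta graph with hub vertices `u`, `v` and paths
`P₁ : v–a–e₁–b–u`, `P₂ : v–c–e₂–d–u` and `P₃` of length `m + 1`: the trees
`T₁, T₂, T₃, T₄` are attached at `a, b, c, d`, the trees `Θ₅, Θ₆` at `e₁, e₂`,
and the trees `Υ₁, Υ₂` at `u`, `v`. -/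
def stmt2x (m : ℕ) : Stmt2Index → ThetaV 3 3 m :=
  fun i =>
    match i with
    | .inl j => ![ThetaV.x1 0, ThetaV.x1 2, ThetaV.x2 0, ThetaV.x2 2] j
    | .inr (.inl j) => ![ThetaV.x1 1, ThetaV.x2 1] j
    | .inr (.inr j) => ![ThetaV.u, ThetaV.v] j

/-- The bicyclic graph of Lemma 2.2: two vertices `u`, `v` joined by the three internally
disjoint paths `P₁ : v–a–e₁–b–u`, `P₂ : u–d–e₂–c–v` and `P₃` of length `m + 1`, with rooted
trees `T₁, T₂, T₃, T₄` attached at `a, b, c, d`, rooted trees `Θ₅, Θ₆` attached at `e₁, e₂`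
and rooted trees `Υ₁, Υ₂` attached at `u, v`. -/
def stmt2Graph (m : ℕ) {WT : Fin 4 → Type} {WΘ WΥ : Fin 2 → Type}
    (TT : ∀ j, SimpleGraph (WT j)) (TΘ : ∀ j, SimpleGraph (WΘ j))
    (TΥ : ∀ j, SimpleGraph (WΥ j))
    (tT : ∀ j, WT j) (tΘ : ∀ j, WΘ j) (tΥ : ∀ j, WΥ j) :=
  attachTrees (theta 3 3 m) (stmt2T TT TΘ TΥ) (stmt2root tT tΘ tΥ) (stmt2x m)

namespace Bicy

/-- Vertices of the normalized graph. -/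
inductive VV (A B C : Type) (m : ℕ) : Type where
  | T : ZMod 2 → ZMod 2 → A → VV A B C m
  | H : ZMod 2 → B → VV A B C m
  | K : ZMod 2 → C → VV A B C m
  | P : Fin m → VV A B C m

/-- Adjacency of the normalized graph. -/
def VAdj {A B C : Type} (m : ℕ) (GA : SimpleGraph A) (GB : SimpleGraph B) (GC : SimpleGraph C)
    (ra : A) (rb : B) (rc : C) : VV A B C m → VV A B C m → Prop
  | .T i j w, .T i' j' w' => i = i' ∧ j = j' ∧ GA.Adj w w'
  | .H i w, .H i' w' => i = i' ∧ GB.Adj w w'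
  | .K i w, .K i' w' => (i = i' ∧ GC.Adj w w') ∨ (i ≠ i' ∧ m = 0 ∧ w = rc ∧ w' = rc)
  | .P n, .P n' => n.val + 1 = n'.val ∨ n'.val + 1 = n.val
  | .T i _ w, .H i' w' => i = i' ∧ w = ra ∧ w' = rb
  | .H i' w', .T i _ w => i = i' ∧ w = ra ∧ w' = rb
  | .T _ j w, .K k w' => k = j + 1 ∧ w = ra ∧ w' = rc
  | .K k w', .T _ j w => k = j + 1 ∧ w = ra ∧ w' = rc
  | .K k w, .P n => w = rc ∧ ((k = 1 ∧ n.val = 0) ∨ (k = 0 ∧ n.val + 1 = m))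
  | .P n, .K k w => w = rc ∧ ((k = 1 ∧ n.val = 0) ∨ (k = 0 ∧ n.val + 1 = m))
  | _, _ => False

/-- The normalized graph. -/
def VG {A B C : Type} (m : ℕ) (GA : SimpleGraph A) (GB : SimpleGraph B) (GC : SimpleGraph C)
    (ra : A) (rb : B) (rc : C) : SimpleGraph (VV A B C m) where
  Adj := VAdj m GA GB GC ra rb rc
  symm := by
    constructor
    intro a b h
    have hA := fun w w' => GA.adj_comm w w'
    have hB := fun w w' => GB.adj_comm w w'
    have hC := fun w w' => GC.adj_comm w w'
    cases a <;> cases b <;> simp only [VAdj] at h ⊢ <;> try tauto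
  loopless := by
    constructor
    intro a h
    cases a <;> simp [VAdj] at h

section
variable {A B C : Type} {m : ℕ} {GA : SimpleGraph A} {GB : SimpleGraph B} {GC : SimpleGraph C}
    {ra : A} {rb : B} {rc : C}

/-- flip of the third path -/
def flipP {m : ℕ} (k : ZMod 2) (n : Fin m) : Fin m := if k = 0 then n else n.rev

lemma flipP_add (k l : ZMod 2) (n : Fin m) : flipP k (flipP l n) = flipP (k + l) n := by
  have h : ∀ k : ZMod 2, k = 0 ∨ k = 1 := by decide
  have h2 : (1 : ZMod 2) + 1 = 0 := by decide
  rcases h k with rfl | rfl <;> rcases h l with rfl | rfl <;> simp [flipP, h2]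

/-- the raw action -/
def actFun (g : B2group ↥(autStab GA ra) ↥(autStab GB rb) ↥(autStab GC rc)) :
    VV A B C m → VV A B C m
  | .T i j w => .T (g.right.toAdd.1 + i) (g.right.toAdd.2 + j)
      ((g.left.1 (g.right.toAdd.1 + i, g.right.toAdd.2 + j)).1 w)
  | .H i w => .H (g.right.toAdd.1 + i) ((g.left.2.1 (g.right.toAdd.1 + i)).1 w)
  | .K i w => .K (g.right.toAdd.2 + i) ((g.left.2.2 (g.right.toAdd.2 + i)).1 w)
  | .P n => .P (flipP g.right.toAdd.2 n)

lemma actFun_one (x : VV A B C m) :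
    actFun (1 : B2group ↥(autStab GA ra) ↥(autStab GB rb) ↥(autStab GC rc)) x = x := by
  have hr : (1 : B2group ↥(autStab GA ra) ↥(autStab GB rb) ↥(autStab GC rc)).right = 1 := rfl
  have hl : (1 : B2group ↥(autStab GA ra) ↥(autStab GB rb) ↥(autStab GC rc)).left = 1 := rfl
  cases x <;> simp [actFun, hr, hl, flipP]

lemma actFun_mul (g h : B2group ↥(autStab GA ra) ↥(autStab GB rb) ↥(autStab GC rc))
    (x : VV A B C m) : actFun (g * h) x = actFun g (actFun h x) := by
  have hr : (g * h).right = g.right * h.right := rfl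
  have hl : (g * h).left = g.left * (B2act _ _ _ g.right) h.left := rfl
  have h1 : ∀ a, (g * h).left.1 (g.right.toAdd + a) = g.left.1 (g.right.toAdd + a) * h.left.1 a := by
    intro a
    have : (-g.right.toAdd) + (g.right.toAdd + a) = a := by abel
    conv_rhs => rw [← this]
    rw [this]; nth_rewrite 3 [← this]; rfl
  have h2 : ∀ a, (g * h).left.2.1 (g.right.toAdd.1 + a) =
      g.left.2.1 (g.right.toAdd.1 + a) * h.left.2.1 a := by
    intro a
    have : (-g.right.toAdd.1) + (g.right.toAdd.1 + a) = a := by abel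
    nth_rewrite 3 [← this]; rfl
  have h3 : ∀ a, (g * h).left.2.2 (g.right.toAdd.2 + a) =
      g.left.2.2 (g.right.toAdd.2 + a) * h.left.2.2 a := by
    intro a
    have : (-g.right.toAdd.2) + (g.right.toAdd.2 + a) = a := by abel
    nth_rewrite 3 [← this]; rfl
  cases x with
  | T i j w =>
    have := h1 (h.right.toAdd.1 + i, h.right.toAdd.2 + j)
    have e : ((g.right.toAdd + (h.right.toAdd.1 + i, h.right.toAdd.2 + j)) : ZMod 2 × ZMod 2)
      = ((g * h).right.toAdd.1 + i, (g * h).right.toAdd.2 + j) := by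
      rw [hr]; ext <;> simp [add_assoc]
    have e' : ((g.right.toAdd + (h.right.toAdd.1 + i, h.right.toAdd.2 + j)) : ZMod 2 × ZMod 2)
      = (g.right.toAdd.1 + (h.right.toAdd.1 + i), g.right.toAdd.2 + (h.right.toAdd.2 + j)) := rfl
    simp only [actFun]
    rw [← e, this, e', hr]
    simp [add_assoc]
  | H i w =>
    have := h2 (h.right.toAdd.1 + i)
    rw [← add_assoc] at this
    simp only [actFun]
    have e : (g * h).right.toAdd.1 = g.right.toAdd.1 + h.right.toAdd.1 := rfl
    rw [e, this]; simp [add_assoc]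
  | K i w =>
    have := h3 (h.right.toAdd.2 + i)
    rw [← add_assoc] at this
    simp only [actFun]
    have e : (g * h).right.toAdd.2 = g.right.toAdd.2 + h.right.toAdd.2 := rfl
    rw [e, this]; simp [add_assoc]
  | P n => simp [actFun, flipP_add, hr]

lemma actFun_adj (g : B2group ↥(autStab GA ra) ↥(autStab GB rb) ↥(autStab GC rc))
    (x y : VV A B C m) (h : (VG m GA GB GC ra rb rc).Adj x y) :
    (VG m GA GB GC ra rb rc).Adj (actFun g x) (actFun g y) := by
  have ha : ∀ d : ↥(autStab GA ra), d.1 ra = ra := fun d => d.2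
  have hb : ∀ d : ↥(autStab GB rb), d.1 rb = rb := fun d => d.2
  have hc : ∀ d : ↥(autStab GC rc), d.1 rc = rc := fun d => d.2
  have h01 : ∀ k : ZMod 2, k = 0 ∨ k = 1 := by decide
  have h11 : (1 : ZMod 2) + 1 = 0 := by decide
  cases x <;> cases y <;> simp only [VG, VAdj, actFun] at h ⊢
  · obtain ⟨rfl, rfl, h⟩ := h
    exact ⟨rfl, rfl, (Iso.map_adj_iff _).2 h⟩
  · obtain ⟨rfl, rfl, rfl⟩ := h
    exact ⟨rfl, ha _, hb _⟩
  · obtain ⟨rfl, rfl, rfl⟩ := h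
    exact ⟨by ring, ha _, hc _⟩
  · obtain ⟨rfl, rfl, rfl⟩ := h
    exact ⟨rfl, ha _, hb _⟩
  · obtain ⟨rfl, h⟩ := h
    exact ⟨rfl, (Iso.map_adj_iff _).2 h⟩
  · obtain ⟨rfl, rfl, rfl⟩ := h
    exact ⟨by ring, ha _, hc _⟩
  · rcases h with ⟨rfl, h⟩ | ⟨h1, h2, rfl, rfl⟩
    · exact Or.inl ⟨rfl, (Iso.map_adj_iff _).2 h⟩
    · exact Or.inr ⟨by simpa using h1, h2, hc _, hc _⟩
  · obtain ⟨rfl, h⟩ := h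
    refine ⟨hc _, ?_⟩
    rcases h01 g.right.toAdd.2 with e | e <;> rw [e]
    · simpa [flipP] using h
    · rcases h with ⟨rfl, h⟩ | ⟨rfl, h⟩ <;> simp [flipP, Fin.val_rev, h11] <;> omega
  · obtain ⟨rfl, h⟩ := h
    refine ⟨hc _, ?_⟩
    rcases h01 g.right.toAdd.2 with e | e <;> rw [e]
    · simpa [flipP] using h
    · rcases h with ⟨rfl, h⟩ | ⟨rfl, h⟩ <;> simp [flipP, Fin.val_rev, h11] <;> omega
  · rcases h01 g.right.toAdd.2 with e | e <;> rw [e]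
    · simpa [flipP] using h
    · simp [flipP, Fin.val_rev]; omega

/-- The action as a homomorphism. -/
def Phi (m : ℕ) (GA : SimpleGraph A) (GB : SimpleGraph B) (GC : SimpleGraph C)
    (ra : A) (rb : B) (rc : C) :
    B2group ↥(autStab GA ra) ↥(autStab GB rb) ↥(autStab GC rc) →*
      (VG m GA GB GC ra rb rc ≃g VG m GA GB GC ra rb rc) where
  toFun g :=
    { toFun := actFun g
      invFun := actFun g⁻¹
      left_inv := fun x => by rw [← actFun_mul, inv_mul_cancel, actFun_one]
      right_inv := fun x => by rw [← actFun_mul, mul_inv_cancel, actFun_one]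
      map_rel_iff' := by
        intro a b
        refine ⟨fun h => ?_, actFun_adj g a b⟩
        have := actFun_adj g⁻¹ _ _ h
        simpa [← actFun_mul, actFun_one] using this }
  map_one' := by ext x; exact actFun_one x
  map_mul' g h := by ext x; exact actFun_mul g h x

lemma Phi_apply (g : B2group ↥(autStab GA ra) ↥(autStab GB rb) ↥(autStab GC rc))
    (x : VV A B C m) : Phi m GA GB GC ra rb rc g x = actFun g x := rfl

lemma Phi_injective : Function.Injective (Phi m GA GB GC ra rb rc) := by
  rw [injective_iff_map_eq_one]
  intro g hg
  have key : ∀ x : VV A B C m, actFun g x = x := fun x => by rw [← Phi_apply, hg]; rfl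
  have hT := fun i j w => key (.T i j w)
  have hH := fun i w => key (.H i w)
  have hK := fun i w => key (.K i w)
  simp only [actFun, VV.T.injEq, VV.H.injEq, VV.K.injEq] at hT hH hK
  have q1 : g.right.toAdd.1 = 0 := by simpa using (hT 0 0 ra).1
  have q2 : g.right.toAdd.2 = 0 := by simpa using (hT 0 0 ra).2.1
  simp only [q1, q2, zero_add, true_and] at hT hH hK
  refine SemidirectProduct.ext (Prod.ext ?_ (Prod.ext ?_ ?_)) ?_
  · funext i
    apply Subtype.ext; ext w
    exact hT i.1 i.2 w
  · funext i
    apply Subtype.ext; ext w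
    exact hH i w
  · funext i
    apply Subtype.ext; ext w
    exact hK i w
  · exact Prod.ext q1 q2
end

lemma tree_unique {V : Type} {G : SimpleGraph V} (hG : G.IsTree) (r w y y' : V)
    (h : G.Adj w y) (h' : G.Adj w y') (hd : G.dist r y ≤ G.dist r w)
    (hd' : G.dist r y' ≤ G.dist r w) : y = y' := by
  have aux : ∀ z, G.Adj w z → G.dist r z ≤ G.dist r w →
      ∃ p : G.Walk w r, p.IsPath ∧ p.snd = z := by
    intro z hz hzd
    obtain ⟨p, hp⟩ := hG.connected.exists_walk_length_eq_dist z r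
    refine ⟨Walk.cons hz p, ?_, by simp⟩
    apply Walk.isPath_of_length_eq_dist
    have := hG.dist_eq_dist_add_one_of_adj r hz
    rw [Walk.length_cons, hp, dist_comm, dist_comm (u := w)]
    omega
  obtain ⟨p, hp, rfl⟩ := aux y h hd
  obtain ⟨q, hq, rfl⟩ := aux y' h' hd'
  rw [(hG.existsUnique_path w r).unique hp hq]

section
variable {A B C : Type} {m : ℕ} (GA : SimpleGraph A) (GB : SimpleGraph B) (GC : SimpleGraph C)
    (ra : A) (rb : B) (rc : C)

instance [Finite A] [Finite B] [Finite C] : Finite (VV A B C m) := by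
  let f : (ZMod 2 × ZMod 2 × A) ⊕ (ZMod 2 × B) ⊕ (ZMod 2 × C) ⊕ Fin m → VV A B C m
    | .inl x => .T x.1 x.2.1 x.2.2
    | .inr (.inl x) => .H x.1 x.2
    | .inr (.inr (.inl x)) => .K x.1 x.2
    | .inr (.inr (.inr x)) => .P x
  have : Finite (ZMod 2) := inferInstanceAs (Finite (Fin 2))
  refine Finite.of_surjective f ?_
  rintro (⟨i, j, w⟩ | ⟨i, w⟩ | ⟨i, w⟩ | n)
  · exact ⟨.inl (i, j, w), rfl⟩
  · exact ⟨.inr (.inl (i, w)), rfl⟩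
  · exact ⟨.inr (.inr (.inl (i, w))), rfl⟩
  · exact ⟨.inr (.inr (.inr n)), rfl⟩

/-- core vertices -/
def Core : VV A B C m → Prop
  | .T _ _ w => w = ra
  | .H _ w => w = rb
  | .K _ w => w = rc
  | .P _ => True

/-- depth -/
noncomputable def depth : VV A B C m → ℕ
  | .T _ _ w => GA.dist ra w
  | .H _ w => GB.dist rb w
  | .K _ w => GC.dist rc w
  | .P _ => 0

/-- root projection -/
def rt : VV A B C m → VV A B C m
  | .T i j _ => .T i j ra
  | .H i _ => .H i rb
  | .K i _ => .K i rc
  | .P n => .P n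

variable {GA GB GC ra rb rc}

lemma rt_core {x : VV A B C m} (h : Core ra rb rc x) : rt ra rb rc x = x := by
  cases x <;> simp_all [Core, rt]

lemma core_two {x : VV A B C m} (h : Core ra rb rc x) :
    ∃ y y', y ≠ y' ∧ Core ra rb rc y ∧ Core ra rb rc y' ∧
      (VG m GA GB GC ra rb rc).Adj x y ∧ (VG m GA GB GC ra rb rc).Adj x y' := by
  cases x with
  | T i j w => 
    exact ⟨.H i rb, .K (j+1) rc, by simp, rfl, rfl, ⟨rfl, h, rfl⟩, ⟨rfl, h, rfl⟩⟩
  | H i w =>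
    exact ⟨.T i 0 ra, .T i 1 ra, by simp, rfl, rfl, ⟨rfl, rfl, h⟩, ⟨rfl, rfl, h⟩⟩
  | K k w =>
    have : k = k + 1 + 1 := by clear h; revert k; decide
    exact ⟨.T 0 (k+1) ra, .T 1 (k+1) ra, by simp, rfl, rfl, ⟨this, rfl, h⟩, ⟨this, rfl, h⟩⟩
  | P n =>
    have h1 : ∃ y : VV A B C m, Core ra rb rc y ∧ (VG m GA GB GC ra rb rc).Adj (.P n) y ∧
        (y = .K 1 rc ∨ ∃ n' : Fin m, n'.val + 1 = n.val ∧ y = .P n') := by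
      by_cases hn : n.val = 0
      · exact ⟨.K 1 rc, rfl, ⟨rfl, Or.inl ⟨rfl, hn⟩⟩, Or.inl rfl⟩
      · exact ⟨.P ⟨n.val - 1, by omega⟩, trivial, Or.inr (by simp; omega),
          Or.inr ⟨⟨n.val - 1, by omega⟩, by simp; omega, rfl⟩⟩
    have h2 : ∃ y : VV A B C m, Core ra rb rc y ∧ (VG m GA GB GC ra rb rc).Adj (.P n) y ∧
        (y = .K 0 rc ∨ ∃ n' : Fin m, n.val + 1 = n'.val ∧ y = .P n') := by
      by_cases hn : n.val + 1 = m
      · exact ⟨.K 0 rc, rfl, ⟨rfl, Or.inr ⟨rfl, hn⟩⟩, Or.inl rfl⟩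
      · exact ⟨.P ⟨n.val + 1, by omega⟩, trivial, Or.inl (by simp),
          Or.inr ⟨⟨n.val + 1, by omega⟩, by simp, rfl⟩⟩
    obtain ⟨y, c, a, hy⟩ := h1
    obtain ⟨y', c', a', hy'⟩ := h2
    refine ⟨y, y', ?_, c, c', a, a'⟩
    rcases hy with rfl | ⟨n1, e1, rfl⟩ <;> rcases hy' with rfl | ⟨n2, e2, rfl⟩ <;> simp
    rintro rfl
    omega

lemma depth_unique (hA : GA.IsTree) (hB : GB.IsTree) (hC : GC.IsTree) {x y y' : VV A B C m}
    (hx : ¬ Core ra rb rc x)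
    (h : (VG m GA GB GC ra rb rc).Adj x y) (h' : (VG m GA GB GC ra rb rc).Adj x y')
    (hd : depth GA GB GC ra rb rc y ≤ depth GA GB GC ra rb rc x)
    (hd' : depth GA GB GC ra rb rc y' ≤ depth GA GB GC ra rb rc x) : y = y' := by
  cases x with
  | T i j w =>
    replace hx : w ≠ ra := hx
    cases y <;> simp only [VG, VAdj, hx, false_and, and_false] at h
    cases y' <;> simp only [VG, VAdj, hx, false_and, and_false] at h'
    obtain ⟨rfl, rfl, h⟩ := h
    obtain ⟨rfl, rfl, h'⟩ := h'
    rw [tree_unique hA ra _ _ _ h h' hd hd']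
  | H i w =>
    replace hx : w ≠ rb := hx
    cases y <;> simp only [VG, VAdj, hx, and_false] at h
    cases y' <;> simp only [VG, VAdj, hx, and_false] at h'
    obtain ⟨rfl, h⟩ := h
    obtain ⟨rfl, h'⟩ := h'
    rw [tree_unique hB rb _ _ _ h h' hd hd']
  | K i w =>
    replace hx : w ≠ rc := hx
    cases y <;> simp only [VG, VAdj, hx, false_and, and_false, or_false] at h
    cases y' <;> simp only [VG, VAdj, hx, false_and, and_false, or_false] at h'
    obtain ⟨rfl, h⟩ := h
    obtain ⟨rfl, h'⟩ := h'
    rw [tree_unique hC rc _ _ _ h h' hd hd']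
  | P n => exact absurd trivial hx

lemma core_pres [Finite A] [Finite B] [Finite C]
    (hA : GA.IsTree) (hB : GB.IsTree) (hC : GC.IsTree)
    (φ : VG m GA GB GC ra rb rc ≃g VG m GA GB GC ra rb rc) {x : VV A B C m}
    (h : Core ra rb rc x) : Core ra rb rc (φ x) := by
  by_contra hx
  have : Nonempty {x : VV A B C m // Core ra rb rc x ∧ ¬ Core ra rb rc (φ x)} := ⟨⟨x, h, hx⟩⟩
  obtain ⟨⟨z, hz, hz'⟩, hmax⟩ := Finite.exists_max
    (fun z : {x : VV A B C m // Core ra rb rc x ∧ ¬ Core ra rb rc (φ x)} =>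
      depth GA GB GC ra rb rc (φ z.1))
  have d0 : ∀ y : VV A B C m, Core ra rb rc y → depth GA GB GC ra rb rc y = 0 := by
    intro y hy
    cases y <;> simp_all [Core, depth]
  have hm : ∀ y, Core ra rb rc y →
      depth GA GB GC ra rb rc (φ y) ≤ depth GA GB GC ra rb rc (φ z) := by
    intro y hy
    by_cases hc : Core ra rb rc (φ y)
    · rw [d0 _ hc]; exact Nat.zero_le _
    · exact hmax ⟨y, hy, hc⟩
  obtain ⟨y, y', hne, cy, cy', ay, ay'⟩ := core_two (GA := GA) (GB := GB) (GC := GC) hz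
  exact hne (φ.injective (depth_unique hA hB hC hz' ((Iso.map_adj_iff φ).2 ay)
    ((Iso.map_adj_iff φ).2 ay') (hm y cy) (hm y' cy')))

lemma core_iff [Finite A] [Finite B] [Finite C]
    (hA : GA.IsTree) (hB : GB.IsTree) (hC : GC.IsTree)
    (φ : VG m GA GB GC ra rb rc ≃g VG m GA GB GC ra rb rc) {x : VV A B C m} :
    Core ra rb rc (φ x) ↔ Core ra rb rc x := by
  refine ⟨fun h => ?_, core_pres hA hB hC φ⟩
  simpa using core_pres hA hB hC φ.symm h

lemma rt_eq_of_adj {x y : VV A B C m} (h : (VG m GA GB GC ra rb rc).Adj x y)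
    (hn : ¬ (Core ra rb rc x ∧ Core ra rb rc y)) : rt ra rb rc x = rt ra rb rc y := by
  cases x <;> cases y <;> simp_all [VG, VAdj, Core, rt]
  tauto

lemma rt_phi [Finite A] [Finite B] [Finite C]
    (hA : GA.IsTree) (hB : GB.IsTree) (hC : GC.IsTree)
    (φ : VG m GA GB GC ra rb rc ≃g VG m GA GB GC ra rb rc) (x : VV A B C m) :
    rt ra rb rc (φ x) = φ (rt ra rb rc x) := by
  have gen : ∀ (W : Type) (G : SimpleGraph W) (r : W) (ι : W → VV A B C m),
      G.IsTree → (∀ w w', G.Adj w w' → (VG m GA GB GC ra rb rc).Adj (ι w) (ι w')) →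
      (∀ w, Core ra rb rc (ι w) ↔ w = r) →
      ∀ w, rt ra rb rc (φ (ι w)) = φ (ι r) := by
    intro W G r ι hG hadj hc w
    obtain ⟨p⟩ := hG.connected w r
    induction p with
    | nil => exact rt_core ((core_iff hA hB hC φ).2 ((hc _).2 rfl))
    | cons hh p ih =>
      rw [← ih hc]
      apply rt_eq_of_adj ((Iso.map_adj_iff φ).2 (hadj _ _ hh))
      rw [core_iff hA hB hC, core_iff hA hB hC, hc, hc]
      rintro ⟨rfl, rfl⟩
      exact G.loopless.irrefl _ hh
  cases x with
  | T i j w =>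
    exact gen A GA ra (fun w => .T i j w) hA (fun w w' h => ⟨rfl, rfl, h⟩) (fun w => Iff.rfl) w
  | H i w => exact gen B GB rb (fun w => .H i w) hB (fun w w' h => ⟨rfl, h⟩) (fun w => Iff.rfl) w
  | K i w =>
    exact gen C GC rc (fun w => .K i w) hC (fun w w' h => Or.inl ⟨rfl, h⟩) (fun w => Iff.rfl) w
  | P n => exact rt_core ((core_iff hA hB hC φ).2 trivial)

lemma restrict {V W : Type} {G : SimpleGraph V} {T : SimpleGraph W} {r : W} (ι : W → V)
    (hι : Function.Injective ι) (hadj : ∀ w w', G.Adj (ι w) (ι w') ↔ T.Adj w w')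
    (φ : G ≃g G) (h1 : ∀ w, ∃ w', φ (ι w) = ι w') (h2 : ∀ w, ∃ w', φ.symm (ι w) = ι w')
    (hr : φ (ι r) = ι r) : ∃ d : ↥(autStab T r), ∀ w, φ (ι w) = ι (d.1 w) := by
  choose f hf using h1
  choose g hg using h2
  refine ⟨⟨{ toFun := f, invFun := g, left_inv := ?_, right_inv := ?_, map_rel_iff' := ?_ }, ?_⟩,
    hf⟩
  · intro w; apply hι; rw [← hg, ← hf]; simp
  · intro w; apply hι; rw [← hf, ← hg]; simp
  · intro a b
    show T.Adj (f a) (f b) ↔ T.Adj a b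
    rw [← hadj, ← hf, ← hf, Iso.map_adj_iff, hadj]
  · show f r = r
    apply hι; rw [← hf, hr]

lemma surj_core [Finite A] [Finite B] [Finite C]
    (hA : GA.IsTree) (hB : GB.IsTree) (hC : GC.IsTree)
    (φ : VG m GA GB GC ra rb rc ≃g VG m GA GB GC ra rb rc)
    (hφ : ∀ x, Core ra rb rc x → φ x = x) : ∃ g, Phi m GA GB GC ra rb rc g = φ := by
  have hφ' : ∀ x, Core ra rb rc x → φ.symm x = x := by
    intro x hx
    apply φ.injective
    rw [hφ x hx]; simp
  have cr : ∀ x : VV A B C m, Core ra rb rc (rt ra rb rc x) := by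
    intro x; cases x <;> simp [Core, rt]
  have r1 : ∀ x, rt ra rb rc (φ x) = rt ra rb rc x := fun x => by
    rw [rt_phi hA hB hC, hφ _ (cr x)]
  have r2 : ∀ x, rt ra rb rc (φ.symm x) = rt ra rb rc x := fun x => by
    rw [rt_phi hA hB hC, hφ' _ (cr x)]
  have sT : ∀ (x : VV A B C m) i j w, rt ra rb rc x = rt ra rb rc (.T i j w) → ∃ w', x = .T i j w' := by
    intro x i j w h; cases x <;> simp_all [rt]
  have sH : ∀ (x : VV A B C m) i w, rt ra rb rc x = rt ra rb rc (.H i w) → ∃ w', x = .H i w' := by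
    intro x i w h; cases x <;> simp_all [rt]
  have sK : ∀ (x : VV A B C m) i w, rt ra rb rc x = rt ra rb rc (.K i w) → ∃ w', x = .K i w' := by
    intro x i w h; cases x <;> simp_all [rt]
  have eT : ∀ ij : ZMod 2 × ZMod 2, ∃ d : ↥(autStab GA ra), ∀ w,
      φ (.T ij.1 ij.2 w) = .T ij.1 ij.2 (d.1 w) := by
    intro ij
    refine restrict (fun w => VV.T ij.1 ij.2 w) ?_ ?_ φ (fun w => sT _ _ _ w (r1 _))
      (fun w => sT _ _ _ w (r2 _)) (hφ _ rfl)
    · intro w w' h; simpa using h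
    · intro w w'; simp [VG, VAdj]
  have eH : ∀ i : ZMod 2, ∃ d : ↥(autStab GB rb), ∀ w, φ (.H i w) = .H i (d.1 w) := by
    intro i
    refine restrict (fun w => VV.H i w) ?_ ?_ φ (fun w => sH _ _ w (r1 _))
      (fun w => sH _ _ w (r2 _)) (hφ _ rfl)
    · intro w w' h; simpa using h
    · intro w w'; simp [VG, VAdj]
  have eK : ∀ i : ZMod 2, ∃ d : ↥(autStab GC rc), ∀ w, φ (.K i w) = .K i (d.1 w) := by
    intro i
    refine restrict (fun w => VV.K i w) ?_ ?_ φ (fun w => sK _ _ w (r1 _))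
      (fun w => sK _ _ w (r2 _)) (hφ _ rfl)
    · intro w w' h; simpa using h
    · intro w w'; simp [VG, VAdj]
  choose dT hT using eT
  choose dH hH using eH
  choose dK hK using eK
  refine ⟨⟨(dT, dH, dK), 1⟩, ?_⟩
  ext x
  change actFun _ x = φ x
  cases x with
  | T i j w => simp [actFun, hT (i, j)]
  | H i w => simp [actFun, hH]
  | K i w => simp [actFun, hK]
  | P n => simp [actFun, flipP, hφ (.P n) trivial]

lemma nbr_T {i j : ZMod 2} {y : VV A B C m} (hy : Core ra rb rc y)
    (h : (VG m GA GB GC ra rb rc).Adj (.T i j ra) y) : y = .H i rb ∨ y = .K (j + 1) rc := by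
  cases y <;> simp_all [VG, VAdj, Core]

lemma nbr_H {i : ZMod 2} {y : VV A B C m} (hy : Core ra rb rc y)
    (h : (VG m GA GB GC ra rb rc).Adj (.H i rb) y) : ∃ j, y = .T i j ra := by
  cases y <;> simp_all [VG, VAdj, Core]

lemma nbr_K {k : ZMod 2} {y : VV A B C m} (hy : Core ra rb rc y)
    (h : (VG m GA GB GC ra rb rc).Adj (.K k rc) y) :
    (∃ i, y = .T i (k + 1) ra) ∨ (m = 0 ∧ y = .K (k + 1) rc) ∨
      ∃ n, y = .P n ∧ ((k = 1 ∧ n.val = 0) ∨ (k = 0 ∧ n.val + 1 = m)) := by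
  have h2 : ∀ k j : ZMod 2, k = j + 1 → j = k + 1 := by decide
  have h3 : ∀ k j : ZMod 2, k ≠ j → j = k + 1 := by decide
  cases y with
  | T i j w =>
    obtain ⟨e, _, _⟩ := h
    obtain rfl : w = ra := hy
    exact Or.inl ⟨i, by rw [h2 _ _ e]⟩
  | H => exact h.elim
  | K i w =>
    obtain rfl : w = rc := hy
    rcases h with ⟨_, h⟩ | ⟨h, h', _⟩
    · exact absurd h (GC.loopless.irrefl _)
    · exact Or.inr (Or.inl ⟨h', by rw [h3 _ _ h]⟩)
  | P n => exact Or.inr (Or.inr ⟨n, rfl, h.2⟩)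

lemma nbr_P {n : Fin m} {y : VV A B C m} (hy : Core ra rb rc y)
    (h : (VG m GA GB GC ra rb rc).Adj (.P n) y) :
    (y = .K 1 rc ∧ n.val = 0) ∨ (y = .K 0 rc ∧ n.val + 1 = m) ∨
      (∃ n' : Fin m, y = .P n' ∧ n'.val + 1 = n.val) ∨
      (∃ n' : Fin m, y = .P n' ∧ n.val + 1 = n'.val) := by
  cases y with
  | T => simp_all [VG, VAdj, Core]
  | H => simp_all [VG, VAdj, Core]
  | K => simp_all [VG, VAdj, Core]
  | P => simp_all [VG, VAdj, Core]; exact h.symm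

lemma hub_of_three {x y1 y2 y3 : VV A B C m} (hx : Core ra rb rc x) (c1 : Core ra rb rc y1)
    (c2 : Core ra rb rc y2) (c3 : Core ra rb rc y3)
    (a1 : (VG m GA GB GC ra rb rc).Adj x y1) (a2 : (VG m GA GB GC ra rb rc).Adj x y2)
    (a3 : (VG m GA GB GC ra rb rc).Adj x y3) (h12 : y1 ≠ y2) (h13 : y1 ≠ y3) (h23 : y2 ≠ y3) :
    ∃ k, x = .K k rc := by
  have h3 : ∀ i j k : ZMod 2, i = j ∨ i = k ∨ j = k := by decide
  cases x with
  | T i j w =>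
    obtain rfl : w = ra := hx
    rcases nbr_T c1 a1 with rfl | rfl <;> rcases nbr_T c2 a2 with rfl | rfl <;>
      rcases nbr_T c3 a3 with rfl | rfl <;> simp at h12 h13 h23
  | H i w =>
    obtain rfl : w = rb := hx
    obtain ⟨j1, rfl⟩ := nbr_H c1 a1
    obtain ⟨j2, rfl⟩ := nbr_H c2 a2
    obtain ⟨j3, rfl⟩ := nbr_H c3 a3
    rcases h3 j1 j2 j3 with rfl | rfl | rfl <;> simp at h12 h13 h23
  | K k w => exact ⟨k, by rw [show w = rc from hx]⟩
  | P n =>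
    exfalso
    rcases nbr_P c1 a1 with ⟨rfl, e1⟩ | ⟨rfl, e1⟩ | ⟨n1, rfl, e1⟩ | ⟨n1, rfl, e1⟩ <;>
    rcases nbr_P c2 a2 with ⟨rfl, e2⟩ | ⟨rfl, e2⟩ | ⟨n2, rfl, e2⟩ | ⟨n2, rfl, e2⟩ <;>
    rcases nbr_P c3 a3 with ⟨rfl, e3⟩ | ⟨rfl, e3⟩ | ⟨n3, rfl, e3⟩ | ⟨n3, rfl, e3⟩ <;>
    simp [Fin.ext_iff] at h12 h13 h23 <;> omega

lemma hub_map [Finite A] [Finite B] [Finite C]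
    (hA : GA.IsTree) (hB : GB.IsTree) (hC : GC.IsTree)
    (φ : VG m GA GB GC ra rb rc ≃g VG m GA GB GC ra rb rc) (k : ZMod 2) :
    ∃ k', φ (.K k rc) = .K k' rc := by
  have hk : k = k + 1 + 1 := by revert k; decide
  have hk2 : k ≠ k + 1 := by revert k; decide
  have h01 : k = 0 ∨ k = 1 := by revert k; decide
  have : ∃ y : VV A B C m, Core ra rb rc y ∧ (VG m GA GB GC ra rb rc).Adj (.K k rc) y ∧
      ∀ i j w, VV.T i j w ≠ y := by
    by_cases hm : m = 0
    · exact ⟨.K (k+1) rc, rfl, Or.inr ⟨hk2, hm, rfl, rfl⟩, by simp⟩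
    · rcases h01 with rfl | rfl
      · exact ⟨.P ⟨m - 1, by omega⟩, trivial, ⟨rfl, Or.inr ⟨rfl, by simp; omega⟩⟩, by simp⟩
      · exact ⟨.P ⟨0, by omega⟩, trivial, ⟨rfl, Or.inl ⟨rfl, rfl⟩⟩, by simp⟩
  obtain ⟨y, cy, ay, ny⟩ := this
  have cp := fun x => core_pres (x := x) hA hB hC φ
  refine hub_of_three (cp (.K k rc) rfl) (cp (.T 0 (k+1) ra) rfl) (cp (.T 1 (k+1) ra) rfl) (cp y cy)
    ((Iso.map_adj_iff φ).2 ⟨hk, rfl, rfl⟩) ((Iso.map_adj_iff φ).2 ⟨hk, rfl, rfl⟩)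
    ((Iso.map_adj_iff φ).2 ay) ?_ ?_ ?_
  · simp
  · simpa using ny _ _ _
  · simpa using ny _ _ _

lemma no_P [Finite A] [Finite B] [Finite C]
    (hA : GA.IsTree) (hB : GB.IsTree) (hC : GC.IsTree)
    (hside : m + 1 ≠ 4 ∨ Nontrivial A ∨ Nontrivial B)
    (φ : VG m GA GB GC ra rb rc ≃g VG m GA GB GC ra rb rc)
    (hK : ∀ k, φ (.K k rc) = .K k rc) (i : ZMod 2) (n : Fin m) : φ (.T i 0 ra) ≠ .P n := by
  intro h
  have cp := fun x => core_pres (x := x) hA hB hC φ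
  have inj : ∀ x y, φ x = φ y → x = y := fun x y h => φ.injective h
  have a1 : (VG m GA GB GC ra rb rc).Adj (φ (.T i 0 ra)) (φ (.K 1 rc)) :=
    (Iso.map_adj_iff φ).2 ⟨by decide, rfl, rfl⟩
  have a2 : (VG m GA GB GC ra rb rc).Adj (φ (.T i 0 ra)) (φ (.H i rb)) :=
    (Iso.map_adj_iff φ).2 ⟨rfl, rfl, rfl⟩
  have a3 : (VG m GA GB GC ra rb rc).Adj (φ (.H i rb)) (φ (.T i 1 ra)) :=
    (Iso.map_adj_iff φ).2 ⟨rfl, rfl, rfl⟩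
  have a4 : (VG m GA GB GC ra rb rc).Adj (φ (.T i 1 ra)) (φ (.K 0 rc)) :=
    (Iso.map_adj_iff φ).2 ⟨by decide, rfl, rfl⟩
  rw [h, hK] at a1
  have hn : n.val = 0 := by simpa [VG, VAdj] using a1
  rw [h] at a2
  have notK : ∀ k x, φ x = .K k rc → x = .K k rc := fun k x hx => inj _ _ (hx.trans (hK k).symm)
  obtain ⟨n1, h1, e1⟩ : ∃ n1 : Fin m, φ (.H i rb) = .P n1 ∧ n1.val = 1 := by
    rcases nbr_P (cp (.H i rb) rfl) a2 with ⟨e, _⟩ | ⟨e, _⟩ | ⟨n', e, e'⟩ | ⟨n', e, e'⟩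
    · simpa using notK _ _ e
    · simpa using notK _ _ e
    · omega
    · exact ⟨n', e, by omega⟩
  rw [h1] at a3
  obtain ⟨n2, h2, e2⟩ : ∃ n2 : Fin m, φ (.T i 1 ra) = .P n2 ∧ n2.val = 2 := by
    rcases nbr_P (cp (.T i 1 ra) rfl) a3 with ⟨e, _⟩ | ⟨e, _⟩ | ⟨n', e, e'⟩ | ⟨n', e, e'⟩
    · simpa using notK _ _ e
    · simpa using notK _ _ e
    · have : n' = n := Fin.ext (by omega)
      rw [this, ← h] at e
      simpa using inj _ _ e
    · exact ⟨n', e, by omega⟩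
  rw [h2, hK] at a4
  have hm : n2.val + 1 = m := by simpa [VG, VAdj] using a4
  have rp : ∀ (y : VV A B C m) n, rt ra rb rc y = .P n → y = .P n := by
    intro y n hy; cases y <;> simp_all [rt]
  rcases hside with hs | hs | hs
  · omega
  · obtain ⟨a, ha⟩ := exists_ne ra
    have := rp _ n ((rt_phi hA hB hC φ (.T i 0 a)).trans h)
    rw [← h] at this
    exact ha (by simpa using inj _ _ this)
  · obtain ⟨a, ha⟩ := exists_ne rb
    have := rp _ n1 ((rt_phi hA hB hC φ (.H i a)).trans h1)
    rw [← h1] at this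
    exact ha (by simpa using inj _ _ this)

lemma T_map [Finite A] [Finite B] [Finite C]
    (hA : GA.IsTree) (hB : GB.IsTree) (hC : GC.IsTree)
    (hside : m + 1 ≠ 4 ∨ Nontrivial A ∨ Nontrivial B)
    (φ : VG m GA GB GC ra rb rc ≃g VG m GA GB GC ra rb rc)
    (hK : ∀ k, φ (.K k rc) = .K k rc) (i : ZMod 2) : ∃ i', φ (.T i 0 ra) = .T i' 0 ra := by
  have a1 : (VG m GA GB GC ra rb rc).Adj (φ (.K 1 rc)) (φ (.T i 0 ra)) :=
    (Iso.map_adj_iff φ).2 ⟨by decide, rfl, rfl⟩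
  rw [hK] at a1
  rcases nbr_K (core_pres (x := .T i 0 ra) hA hB hC φ rfl) a1 with h | ⟨_, h⟩ | ⟨n, h, _⟩
  · exact h
  · rw [← hK] at h
    simpa using φ.injective h
  · exact absurd h (no_P hA hB hC hside φ hK i n)

lemma fix_core [Finite A] [Finite B] [Finite C]
    (hA : GA.IsTree) (hB : GB.IsTree) (hC : GC.IsTree)
    (hside : m + 1 ≠ 4 ∨ Nontrivial A ∨ Nontrivial B)
    (φ : VG m GA GB GC ra rb rc ≃g VG m GA GB GC ra rb rc)
    (hK : ∀ k, φ (.K k rc) = .K k rc) (h0 : φ (.T 0 0 ra) = .T 0 0 ra) :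
    ∀ x, Core ra rb rc x → φ x = x := by
  have cp := fun x => core_pres (x := x) hA hB hC φ
  have inj : ∀ x y, φ x = φ y → x = y := fun x y h => φ.injective h
  have z01 : ∀ k : ZMod 2, k = 0 ∨ k = 1 := by decide
  -- if the value `φ x` is a fixed vertex `y` then `x = y`
  have notfix : ∀ y, φ y = y → ∀ x, φ x = y → x = y := fun y hy x hx => inj _ _ (hx.trans hy.symm)
  have hT0 : ∀ i, φ (.T i 0 ra) = .T i 0 ra := by
    intro i
    rcases z01 i with rfl | rfl
    · exact h0
    · obtain ⟨i', hi⟩ := T_map hA hB hC hside φ hK 1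
      rcases z01 i' with rfl | rfl
      · simpa using notfix _ h0 _ hi
      · exact hi
  have hH : ∀ i, φ (.H i rb) = .H i rb := by
    intro i
    have a2 : (VG m GA GB GC ra rb rc).Adj (φ (.T i 0 ra)) (φ (.H i rb)) :=
      (Iso.map_adj_iff φ).2 ⟨rfl, rfl, rfl⟩
    rw [hT0] at a2
    rcases nbr_T (cp (.H i rb) rfl) a2 with h | h
    · exact h
    · simpa using notfix _ (hK _) _ h
  have hT1 : ∀ i, φ (.T i 1 ra) = .T i 1 ra := by
    intro i
    have a3 : (VG m GA GB GC ra rb rc).Adj (φ (.H i rb)) (φ (.T i 1 ra)) :=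
      (Iso.map_adj_iff φ).2 ⟨rfl, rfl, rfl⟩
    rw [hH] at a3
    obtain ⟨j, h⟩ := nbr_H (cp (.T i 1 ra) rfl) a3
    rcases z01 j with rfl | rfl
    · simpa using notfix _ (hT0 _) _ h
    · exact h
  have hP : ∀ (k : ℕ) (hk : k < m), φ (.P ⟨k, hk⟩) = .P ⟨k, hk⟩ := by
    intro k
    induction k using Nat.strong_induction_on with
    | _ k ih =>
    intro hk
    rcases Nat.eq_zero_or_pos k with rfl | hpos
    · have a : (VG m GA GB GC ra rb rc).Adj (φ (.K 1 rc)) (φ (.P ⟨0, hk⟩)) :=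
        (Iso.map_adj_iff φ).2 ⟨rfl, Or.inl ⟨rfl, rfl⟩⟩
      rw [hK] at a
      rcases nbr_K (cp (.P ⟨0, hk⟩) trivial) a with ⟨i, h⟩ | ⟨hm, _⟩ | ⟨n, h, h' | h'⟩
      · simpa using notfix _ (hT0 i) _ h
      · omega
      · rw [h]; congr 1; exact Fin.ext h'.2
      · exact absurd h'.1 (by decide)
    · have hk1 : k - 1 < m := by omega
      have a : (VG m GA GB GC ra rb rc).Adj (φ (.P ⟨k - 1, hk1⟩)) (φ (.P ⟨k, hk⟩)) :=
        (Iso.map_adj_iff φ).2 (Or.inl (by simp; omega))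
      rw [ih (k - 1) (by omega)] at a
      rcases nbr_P (cp (.P ⟨k, hk⟩) trivial) a with ⟨h, _⟩ | ⟨h, _⟩ | ⟨n', h, e⟩ | ⟨n', h, e⟩
      · simpa using notfix _ (hK _) _ h
      · simpa using notfix _ (hK _) _ h
      · have := notfix _ (ih n'.val (by simp at e; omega) n'.2) _ h
        simp [Fin.ext_iff] at this e
        omega
      · rw [h]; congr 1; apply Fin.ext; simp at e ⊢; omega
  intro x hx
  cases x with
  | T i j w =>
    obtain rfl : w = ra := hx
    rcases z01 j with rfl | rfl
    · exact hT0 i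
    · exact hT1 i
  | H i w =>
    obtain rfl : w = rb := hx
    exact hH i
  | K i w =>
    obtain rfl : w = rc := hx
    exact hK i
  | P n => exact hP n.val n.2

lemma Phi_surjective [Finite A] [Finite B] [Finite C]
    (hA : GA.IsTree) (hB : GB.IsTree) (hC : GC.IsTree)
    (hside : m + 1 ≠ 4 ∨ Nontrivial A ∨ Nontrivial B) :
    Function.Surjective (Phi m GA GB GC ra rb rc) := by
  have z2 : ∀ k : ZMod 2, k + k = 0 := by decide
  have z3 : ∀ k k' : ZMod 2, k ≠ k' → k + k' = 1 := by decide
  have z01 : ∀ k : ZMod 2, k = 0 ∨ k = 1 := by decide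
  let b : ZMod 2 × ZMod 2 → B2group ↥(autStab GA ra) ↥(autStab GB rb) ↥(autStab GC rc) :=
    fun q => SemidirectProduct.mk 1 (Multiplicative.ofAdd q)
  have bK : ∀ q k, Phi m GA GB GC ra rb rc (b q) (.K k rc) = .K (q.2 + k) rc := fun q k => rfl
  have bT : ∀ q i j, Phi m GA GB GC ra rb rc (b q) (.T i j ra) = .T (q.1 + i) (q.2 + j) ra :=
    fun q i j => rfl
  intro φ
  obtain ⟨k0, h0⟩ := hub_map hA hB hC φ 0
  obtain ⟨k1, h1⟩ := hub_map hA hB hC φ 1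
  have hne : k0 ≠ k1 := by
    rintro rfl
    have := φ.injective (h0.trans h1.symm)
    simp at this
  obtain ⟨ψ, hψ⟩ : ∃ ψ, ψ = Phi m GA GB GC ra rb rc (b (0, k0)) * φ := ⟨_, rfl⟩
  have hK : ∀ k, ψ (.K k rc) = .K k rc := by
    intro k
    rw [hψ, RelIso.mul_apply]
    rcases z01 k with rfl | rfl
    · rw [h0, bK, z2]
    · rw [h1, bK, z3 _ _ hne]
  obtain ⟨i, hi⟩ := T_map hA hB hC hside ψ hK 0
  obtain ⟨χ, hχ⟩ : ∃ χ, χ = Phi m GA GB GC ra rb rc (b (i, 0)) * ψ := ⟨_, rfl⟩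
  have hχK : ∀ k, χ (.K k rc) = .K k rc := by
    intro k
    rw [hχ, RelIso.mul_apply, hK, bK, zero_add]
  have hχT : χ (.T 0 0 ra) = .T 0 0 ra := by
    rw [hχ, RelIso.mul_apply, hi, bT, z2, zero_add]
  obtain ⟨g, hg⟩ := surj_core hA hB hC χ (fix_core hA hB hC hside χ hχK hχT)
  refine ⟨(b (0, k0))⁻¹ * ((b (i, 0))⁻¹ * g), ?_⟩
  rw [map_mul, map_mul, hg, hχ, hψ, map_inv, map_inv, inv_mul_cancel_left, inv_mul_cancel_left]
end

section
variable {A B C : Type} {m : ℕ} {GA : SimpleGraph A} {GB : SimpleGraph B} {GC : SimpleGraph C}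
    {ra : A} {rb : B} {rc : C} {WT : Fin 4 → Type} {WΘ WΥ : Fin 2 → Type}
    {TT : ∀ j, SimpleGraph (WT j)} {TΘ : ∀ j, SimpleGraph (WΘ j)} {TΥ : ∀ j, SimpleGraph (WΥ j)}
    {tT : ∀ j, WT j} {tΘ : ∀ j, WΘ j} {tΥ : ∀ j, WΥ j}

/-- first index -/
def i1 : Fin 4 → ZMod 2 := ![0, 0, 1, 1]
/-- second index -/
def i2 : Fin 4 → ZMod 2 := ![0, 1, 0, 1]
/-- index of pairs -/
def ic : Fin 2 → ZMod 2 := ![0, 1]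

/-- base part of the normalization map -/
def fb (ra : A) (rb : B) (rc : C) : ThetaV 3 3 m → VV A B C m
  | .u => .K 0 rc
  | .v => .K 1 rc
  | .x1 k => ![.T 0 0 ra, .H 0 rb, .T 0 1 ra] k
  | .x2 k => ![.T 1 0 ra, .H 1 rb, .T 1 1 ra] k
  | .x3 n => .P n

/-- the normalization map -/
def fN (ra : A) (rb : B) (rc : C) (tT : ∀ j, WT j) (tΘ : ∀ j, WΘ j) (tΥ : ∀ j, WΥ j)
    (eT : ∀ j, TT j ≃g GA) (eΘ : ∀ j, TΘ j ≃g GB) (eΥ : ∀ j, TΥ j ≃g GC) :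
    (ThetaV 3 3 m ⊕ Σ i, {w : stmt2W WT WΘ WΥ i // w ≠ stmt2root tT tΘ tΥ i}) → VV A B C m
  | .inl x => fb ra rb rc x
  | .inr ⟨.inl j, w⟩ => .T (i1 j) (i2 j) (eT j w.1)
  | .inr ⟨.inr (.inl j), w⟩ => .H (ic j) (eΘ j w.1)
  | .inr ⟨.inr (.inr j), w⟩ => .K (ic j) (eΥ j w.1)

variable (eT : ∀ j, TT j ≃g GA) (eΘ : ∀ j, TΘ j ≃g GB) (eΥ : ∀ j, TΥ j ≃g GC)

lemma fb_core (x : ThetaV 3 3 m) : Core ra rb rc (fb ra rb rc x) := by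
  cases x with
  | u => rfl
  | v => rfl
  | x1 k => fin_cases k <;> rfl
  | x2 k => fin_cases k <;> rfl
  | x3 n => trivial

lemma fb_inj : Function.Injective (fb (m := m) ra rb rc) := by
  have h := (by decide : (0 : ZMod 2) ≠ 1)
  intro x y hxy
  cases x with
  | u => cases y with
    | u => rfl
    | v => simp [fb] at hxy
    | x1 k => fin_cases k <;> simp [fb] at hxy
    | x2 k => fin_cases k <;> simp [fb] at hxy
    | x3 n => simp [fb] at hxy
  | v => cases y with
    | u => simp [fb] at hxy
    | v => rfl
    | x1 k => fin_cases k <;> simp [fb] at hxy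
    | x2 k => fin_cases k <;> simp [fb] at hxy
    | x3 n => simp [fb] at hxy
  | x1 l => cases y with
    | u => fin_cases l <;> simp [fb] at hxy
    | v => fin_cases l <;> simp [fb] at hxy
    | x1 k => fin_cases k <;> fin_cases l <;> simp [fb] at hxy ⊢
    | x2 k => fin_cases k <;> fin_cases l <;> simp [fb] at hxy
    | x3 n => fin_cases l <;> simp [fb] at hxy
  | x2 l => cases y with
    | u => fin_cases l <;> simp [fb] at hxy
    | v => fin_cases l <;> simp [fb] at hxy
    | x1 k => fin_cases k <;> fin_cases l <;> simp [fb] at hxy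
    | x2 k => fin_cases k <;> fin_cases l <;> simp [fb] at hxy ⊢
    | x3 n => fin_cases l <;> simp [fb] at hxy
  | x3 l => cases y with
    | u => simp [fb] at hxy
    | v => simp [fb] at hxy
    | x1 k => fin_cases k <;> simp [fb] at hxy
    | x2 k => fin_cases k <;> simp [fb] at hxy
    | x3 n => simpa [fb] using hxy

lemma fb_adj (x y : ThetaV 3 3 m) :
    (VG m GA GB GC ra rb rc).Adj (fb ra rb rc x) (fb ra rb rc y) ↔ (theta 3 3 m).Adj x y := by
  have h11 : (1 : ZMod 2) + 1 = 0 := by decide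
  cases x with
  | u => cases y with
    | u => simp [fb, VG, VAdj, theta]
    | v => simp [fb, VG, VAdj, theta]
    | x1 k => fin_cases k <;> simp [fb, VG, VAdj, theta, h11]
    | x2 k => fin_cases k <;> simp [fb, VG, VAdj, theta, h11]
    | x3 n => simp [fb, VG, VAdj, theta]; omega
  | v => cases y with
    | u => simp [fb, VG, VAdj, theta]
    | v => simp [fb, VG, VAdj, theta]
    | x1 k => fin_cases k <;> simp [fb, VG, VAdj, theta, h11]
    | x2 k => fin_cases k <;> simp [fb, VG, VAdj, theta, h11]
    | x3 n => simp [fb, VG, VAdj, theta]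
  | x1 l => cases y with
    | u => fin_cases l <;> simp [fb, VG, VAdj, theta, h11]
    | v => fin_cases l <;> simp [fb, VG, VAdj, theta, h11]
    | x1 k => fin_cases k <;> fin_cases l <;> simp [fb, VG, VAdj, theta]
    | x2 k => fin_cases k <;> fin_cases l <;> simp [fb, VG, VAdj, theta]
    | x3 n => fin_cases l <;> simp [fb, VG, VAdj, theta]
  | x2 l => cases y with
    | u => fin_cases l <;> simp [fb, VG, VAdj, theta, h11]
    | v => fin_cases l <;> simp [fb, VG, VAdj, theta, h11]
    | x1 k => fin_cases k <;> fin_cases l <;> simp [fb, VG, VAdj, theta]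
    | x2 k => fin_cases k <;> fin_cases l <;> simp [fb, VG, VAdj, theta]
    | x3 n => fin_cases l <;> simp [fb, VG, VAdj, theta]
  | x3 l => cases y with
    | u => simp [fb, VG, VAdj, theta]; omega
    | v => simp [fb, VG, VAdj, theta]
    | x1 k => fin_cases k <;> simp [fb, VG, VAdj, theta]
    | x2 k => fin_cases k <;> simp [fb, VG, VAdj, theta]
    | x3 n => simp [fb, VG, VAdj, theta]

lemma fb_x_T (j : Fin 4) : fb (m := m) ra rb rc (stmt2x m (.inl j)) = .T (i1 j) (i2 j) ra := by
  fin_cases j <;> rfl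
lemma fb_x_H (j : Fin 2) : fb (m := m) ra rb rc (stmt2x m (.inr (.inl j))) = .H (ic j) rb := by
  fin_cases j <;> rfl
lemma fb_x_K (j : Fin 2) : fb (m := m) ra rb rc (stmt2x m (.inr (.inr j))) = .K (ic j) rc := by
  fin_cases j <;> rfl

/-- A core vertex is adjacent to a non-core vertex only at its own root. -/
lemma core_adj_T {x : VV A B C m} (hx : Core ra rb rc x) {i j : ZMod 2} {w : A} (hw : w ≠ ra) :
    (VG m GA GB GC ra rb rc).Adj x (.T i j w) ↔ x = .T i j ra ∧ GA.Adj ra w := by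
  cases x <;> simp_all [VG, VAdj, Core, and_assoc]

lemma core_adj_H {x : VV A B C m} (hx : Core ra rb rc x) {i : ZMod 2} {w : B} (hw : w ≠ rb) :
    (VG m GA GB GC ra rb rc).Adj x (.H i w) ↔ x = .H i rb ∧ GB.Adj rb w := by
  cases x <;> simp_all [VG, VAdj, Core]

lemma core_adj_K {x : VV A B C m} (hx : Core ra rb rc x) {i : ZMod 2} {w : C} (hw : w ≠ rc) :
    (VG m GA GB GC ra rb rc).Adj x (.K i w) ↔ x = .K i rc ∧ GC.Adj rc w := by
  cases x <;> simp_all [VG, VAdj, Core]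

lemma ic_inj : ∀ j j', ic j = ic j' → j = j' := by decide
lemma i12_inj : ∀ j j', i1 j = i1 j' → i2 j = i2 j' → j = j' := by decide

lemma fN_bij (heT : ∀ j, eT j (tT j) = ra) (heΘ : ∀ j, eΘ j (tΘ j) = rb)
    (heΥ : ∀ j, eΥ j (tΥ j) = rc) :
    Function.Bijective (fN (m := m) ra rb rc tT tΘ tΥ eT eΘ eΥ) := by
  have nT : ∀ j w, w ≠ tT j → eT j w ≠ ra := fun j w h h' =>
    h ((eT j).injective (h'.trans (heT j).symm))
  have nH : ∀ j w, w ≠ tΘ j → eΘ j w ≠ rb := fun j w h h' =>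
    h ((eΘ j).injective (h'.trans (heΘ j).symm))
  have nK : ∀ j w, w ≠ tΥ j → eΥ j w ≠ rc := fun j w h h' =>
    h ((eΥ j).injective (h'.trans (heΥ j).symm))
  constructor
  · have cc := fun x => fb_core (m := m) (ra := ra) (rb := rb) (rc := rc) x
    rintro (x | ⟨j | j | j, w, hw⟩) (y | ⟨j' | j' | j', w', hw'⟩) h <;> simp only [fN] at h
    · rw [fb_inj h]
    · have := cc x; rw [h] at this; exact absurd this (nT _ _ hw')
    · have := cc x; rw [h] at this; exact absurd this (nH _ _ hw')
    · have := cc x; rw [h] at this; exact absurd this (nK _ _ hw')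
    · have := cc y; rw [← h] at this; exact absurd this (nT _ _ hw)
    · simp only [VV.T.injEq] at h
      obtain rfl := i12_inj _ _ h.1 h.2.1
      obtain rfl := (eT j).injective h.2.2
      rfl
    · simp at h
    · simp at h
    · have := cc y; rw [← h] at this; exact absurd this (nH _ _ hw)
    · simp at h
    · simp only [VV.H.injEq] at h
      obtain rfl := ic_inj _ _ h.1
      obtain rfl := (eΘ j).injective h.2
      rfl
    · simp at h
    · have := cc y; rw [← h] at this; exact absurd this (nK _ _ hw)
    · simp at h
    · simp at h
    · simp only [VV.K.injEq] at h
      obtain rfl := ic_inj _ _ h.1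
      obtain rfl := (eΥ j).injective h.2
      rfl
  · have s1 : ∀ i j : ZMod 2, ∃ l, i1 l = i ∧ i2 l = j := by decide
    have s2 : ∀ i : ZMod 2, ∃ l, ic l = i := by decide
    rintro (⟨i, j, w⟩ | ⟨i, w⟩ | ⟨i, w⟩ | n)
    · obtain ⟨l, rfl, rfl⟩ := s1 i j
      obtain ⟨w, rfl⟩ := (eT l).surjective w
      by_cases hw : w = tT l
      · exact ⟨.inl (stmt2x m (.inl l)), by rw [hw, heT]; exact fb_x_T l⟩
      · exact ⟨.inr ⟨.inl l, ⟨w, hw⟩⟩, rfl⟩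
    · obtain ⟨l, rfl⟩ := s2 i
      obtain ⟨w, rfl⟩ := (eΘ l).surjective w
      by_cases hw : w = tΘ l
      · exact ⟨.inl (stmt2x m (.inr (.inl l))), by rw [hw, heΘ]; exact fb_x_H l⟩
      · exact ⟨.inr ⟨.inr (.inl l), ⟨w, hw⟩⟩, rfl⟩
    · obtain ⟨l, rfl⟩ := s2 i
      obtain ⟨w, rfl⟩ := (eΥ l).surjective w
      by_cases hw : w = tΥ l
      · exact ⟨.inl (stmt2x m (.inr (.inr l))), by rw [hw, heΥ]; exact fb_x_K l⟩
      · exact ⟨.inr ⟨.inr (.inr l), ⟨w, hw⟩⟩, rfl⟩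
    · exact ⟨.inl (.x3 n), rfl⟩

lemma fN_adj (heT : ∀ j, eT j (tT j) = ra) (heΘ : ∀ j, eΘ j (tΘ j) = rb)
    (heΥ : ∀ j, eΥ j (tΥ j) = rc)
    (x y : ThetaV 3 3 m ⊕ Σ i, {w : stmt2W WT WΘ WΥ i // w ≠ stmt2root tT tΘ tΥ i}) :
    (VG m GA GB GC ra rb rc).Adj (fN ra rb rc tT tΘ tΥ eT eΘ eΥ x)
      (fN ra rb rc tT tΘ tΥ eT eΘ eΥ y) ↔ (stmt2Graph m TT TΘ TΥ tT tΘ tΥ).Adj x y := by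
  have nT : ∀ j w, w ≠ tT j → eT j w ≠ ra := fun j w h h' =>
    h ((eT j).injective (h'.trans (heT j).symm))
  have nH : ∀ j w, w ≠ tΘ j → eΘ j w ≠ rb := fun j w h h' =>
    h ((eΘ j).injective (h'.trans (heΘ j).symm))
  have nK : ∀ j w, w ≠ tΥ j → eΥ j w ≠ rc := fun j w h h' =>
    h ((eΥ j).injective (h'.trans (heΥ j).symm))
  have cc := fun x => fb_core (m := m) (ra := ra) (rb := rb) (rc := rc) x
  have bT : ∀ (x : ThetaV 3 3 m) j (w : {w : WT j // w ≠ tT j}),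
      (VG m GA GB GC ra rb rc).Adj (fb ra rb rc x) (.T (i1 j) (i2 j) (eT j w.1)) ↔
      (x = stmt2x m (.inl j) ∧ (TT j).Adj (tT j) w.1) := by
    intro x j w
    rw [core_adj_T (cc x) (nT _ _ w.2), ← fb_x_T (rb := rb) (rc := rc), fb_inj.eq_iff,
      ← (eT j).map_adj_iff (v := tT j), heT]
  have bH : ∀ (x : ThetaV 3 3 m) j (w : {w : WΘ j // w ≠ tΘ j}),
      (VG m GA GB GC ra rb rc).Adj (fb ra rb rc x) (.H (ic j) (eΘ j w.1)) ↔
      (x = stmt2x m (.inr (.inl j)) ∧ (TΘ j).Adj (tΘ j) w.1) := by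
    intro x j w
    rw [core_adj_H (cc x) (nH _ _ w.2), ← fb_x_H (ra := ra) (rc := rc), fb_inj.eq_iff,
      ← (eΘ j).map_adj_iff (v := tΘ j), heΘ]
  have bK : ∀ (x : ThetaV 3 3 m) j (w : {w : WΥ j // w ≠ tΥ j}),
      (VG m GA GB GC ra rb rc).Adj (fb ra rb rc x) (.K (ic j) (eΥ j w.1)) ↔
      (x = stmt2x m (.inr (.inr j)) ∧ (TΥ j).Adj (tΥ j) w.1) := by
    intro x j w
    rw [core_adj_K (cc x) (nK _ _ w.2), ← fb_x_K (ra := ra) (rb := rb), fb_inj.eq_iff,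
      ← (eΥ j).map_adj_iff (v := tΥ j), heΥ]
  have cross : ∀ (i i' : Stmt2Index) (w : {w : stmt2W WT WΘ WΥ i // w ≠ stmt2root tT tΘ tΥ i})
      (w' : {w : stmt2W WT WΘ WΥ i' // w ≠ stmt2root tT tΘ tΥ i'}), i ≠ i' →
      ¬ (stmt2Graph m TT TΘ TΥ tT tΘ tΥ).Adj (.inr ⟨i, w⟩) (.inr ⟨i', w'⟩) :=
    fun i i' w w' h h' => h h'.1
  rcases x with x | ⟨j | j | j, w⟩ <;> rcases y with y | ⟨j' | j' | j', w'⟩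
  · exact fb_adj x y
  · exact bT x j' w'
  · exact bH x j' w'
  · exact bK x j' w'
  · rw [adj_comm]; exact bT y j w
  · by_cases hj : j = j'
    · subst hj
      constructor
      · rintro ⟨_, _, h⟩
        exact ⟨rfl, (eT j).map_adj_iff.1 h⟩
      · rintro ⟨_, h⟩
        exact ⟨rfl, rfl, (eT j).map_adj_iff.2 h⟩
    · refine iff_of_false ?_ (cross _ _ _ _ (by simpa using hj))
      rintro ⟨h1, h2, _⟩
      exact hj (i12_inj _ _ h1 h2)
  · refine iff_of_false ?_ (cross _ _ _ _ (by simp))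
    rintro ⟨_, h, _⟩
    exact nT _ _ w.2 h
  · refine iff_of_false ?_ (cross _ _ _ _ (by simp))
    rintro ⟨_, h, _⟩
    exact nT _ _ w.2 h
  · rw [adj_comm]; exact bH y j w
  · refine iff_of_false ?_ (cross _ _ _ _ (by simp))
    rintro ⟨_, h, _⟩
    exact nT _ _ w'.2 h
  · by_cases hj : j = j'
    · subst hj
      constructor
      · rintro ⟨_, h⟩
        exact ⟨rfl, (eΘ j).map_adj_iff.1 h⟩
      · rintro ⟨_, h⟩
        exact ⟨rfl, (eΘ j).map_adj_iff.2 h⟩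
    · refine iff_of_false ?_ (cross _ _ _ _ (by simpa using hj))
      rintro ⟨h1, _⟩
      exact hj (ic_inj _ _ h1)
  · refine iff_of_false ?_ (cross _ _ _ _ (by simp))
    intro h
    exact h
  · rw [adj_comm]; exact bK y j w
  · refine iff_of_false ?_ (cross _ _ _ _ (by simp))
    rintro ⟨_, h, _⟩
    exact nT _ _ w'.2 h
  · refine iff_of_false ?_ (cross _ _ _ _ (by simp))
    intro h
    exact h
  · by_cases hj : j = j'
    · subst hj
      constructor
      · rintro (⟨_, h⟩ | ⟨h, _⟩)
        · exact ⟨rfl, (eΥ j).map_adj_iff.1 h⟩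
        · exact absurd rfl h
      · rintro ⟨_, h⟩
        exact Or.inl ⟨rfl, (eΥ j).map_adj_iff.2 h⟩
    · refine iff_of_false ?_ (cross _ _ _ _ (by simpa using hj))
      rintro (⟨h1, _⟩ | ⟨_, _, h, _⟩)
      · exact hj (ic_inj _ _ h1)
      · exact nK _ _ w.2 h

/-- conjugation by a graph isomorphism -/
def conjAut {V W : Type} {G : SimpleGraph V} {G' : SimpleGraph W} (e : G ≃g G') :
    (G ≃g G) ≃* (G' ≃g G') where
  toFun φ := (e.symm.trans φ).trans e
  invFun φ := (e.trans φ).trans e.symm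
  left_inv φ := by ext x; simp
  right_inv φ := by ext x; simp
  map_mul' φ ψ := by ext x; simp

end
end Bicy

/-- Lemma 2.2. With all the trees finite, `T₁ ≅ T₂ ≅ T₃ ≅ T₄`,
`Θ₅ ≅ Θ₆` and `Υ₁ ≅ Υ₂` as rooted trees, and assuming `ℓ = m + 1 ≠ 4` or one of `T₁`, `Θ₅`
has more than one vertex, the automorphism group of the bicyclic graph `Δ` is isomorphic to
`(D⁴ × H² × K²) ⋊ (Z₂ × Z₂)` where `D = Aut(T₁)_root`, `H = Aut(Θ₅)_root`,
`K = Aut(Υ₁)_root`, and `Z₂ × Z₂` acts as described in `B2act`. -/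
theorem aut_bicyclic_first_type
    (m : ℕ) {WT : Fin 4 → Type} {WΘ WΥ : Fin 2 → Type}
    [∀ j, Fintype (WT j)] [∀ j, Fintype (WΘ j)] [∀ j, Fintype (WΥ j)]
    (TT : ∀ j, SimpleGraph (WT j)) (TΘ : ∀ j, SimpleGraph (WΘ j))
    (TΥ : ∀ j, SimpleGraph (WΥ j))
    (tT : ∀ j, WT j) (tΘ : ∀ j, WΘ j) (tΥ : ∀ j, WΥ j)
    (hTtree : ∀ j, (TT j).IsTree) (hΘtree : ∀ j, (TΘ j).IsTree)
    (hΥtree : ∀ j, (TΥ j).IsTree)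
    (hTiso : ∀ j j', ∃ e : TT j ≃g TT j', e (tT j) = tT j')
    (hΘiso : ∃ e : TΘ 0 ≃g TΘ 1, e (tΘ 0) = tΘ 1)
    (hΥiso : ∃ e : TΥ 0 ≃g TΥ 1, e (tΥ 0) = tΥ 1)
    (hside : m + 1 ≠ 4 ∨ Nontrivial (WT 0) ∨ Nontrivial (WΘ 0)) :
    Nonempty ((stmt2Graph m TT TΘ TΥ tT tΘ tΥ ≃g stmt2Graph m TT TΘ TΥ tT tΘ tΥ) ≃*
      B2group ↥(autStab (TT 0) (tT 0)) ↥(autStab (TΘ 0) (tΘ 0)) ↥(autStab (TΥ 0) (tΥ 0))) := by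
  choose eT heT using fun j => hTiso j 0
  have hΘ' : ∀ j, ∃ e : TΘ j ≃g TΘ 0, e (tΘ j) = tΘ 0 := by
    obtain ⟨e, he⟩ := hΘiso
    intro j
    fin_cases j
    · exact ⟨Iso.refl, rfl⟩
    · exact ⟨e.symm, (congrArg e.symm he.symm).trans (e.symm_apply_apply _)⟩
  have hΥ' : ∀ j, ∃ e : TΥ j ≃g TΥ 0, e (tΥ j) = tΥ 0 := by
    obtain ⟨e, he⟩ := hΥiso
    intro j
    fin_cases j
    · exact ⟨Iso.refl, rfl⟩
    · exact ⟨e.symm, (congrArg e.symm he.symm).trans (e.symm_apply_apply _)⟩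
  choose eΘ heΘ using hΘ'
  choose eΥ heΥ using hΥ'
  let E : stmt2Graph m TT TΘ TΥ tT tΘ tΥ ≃g
      Bicy.VG m (TT 0) (TΘ 0) (TΥ 0) (tT 0) (tΘ 0) (tΥ 0) :=
    { toEquiv := Equiv.ofBijective _ (Bicy.fN_bij (m := m) eT eΘ eΥ heT heΘ heΥ)
      map_rel_iff' := fun {a b} => Bicy.fN_adj eT eΘ eΥ heT heΘ heΥ a b }
  exact ⟨(Bicy.conjAut E).trans (MulEquiv.ofBijective (Bicy.Phi m (TT 0) (TΘ 0) (TΥ 0) (tT 0) (tΘ 0) (tΥ 0))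
    ⟨Bicy.Phi_injective, Bicy.Phi_surjective (hTtree 0) (hΘtree 0) (hΥtree 0) hside⟩).symm⟩
end

section
/- For every finite tree T there exists a bicyclic graph Δ such that Aut(Δ) ≅ Aut(T). Consequently, every group in Jordan's class 𝒯 is the automorphism group of a bicyclic graph. -/
open SimpleGraph

/-- Jordan's class `𝒯`: the smallest isomorphism-closed class of groups containing the
trivial group and closed under direct products of members and wreath products `G ≀ Sₙ`
(with `Sₙ` permuting the `n` coordinates of `Gⁿ`) for members `G` and `n ≥ 2`. -/
inductive JordanT : ∀ (G : Type) [Group G], Prop where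
  | triv : JordanT PUnit
  | congr {G H : Type} [Group G] [Group H] : JordanT G → (G ≃* H) → JordanT H
  | prod {G H : Type} [Group G] [Group H] : JordanT G → JordanT H → JordanT (G × H)
  | wreath {G : Type} [Group G] (n : ℕ) (hn : 2 ≤ n) :
      JordanT G → JordanT ((Fin n → G) ⋊[permHom (Fin n) G] Equiv.Perm (Fin n))

/-- A graph is bicyclic if it is connected and its number of edges exceeds its number of
vertices by exactly one (i.e. it has cyclomatic number 2). -/
def SimpleGraph.IsBicyclic {V : Type} (G : SimpleGraph V) : Prop :=
  G.Connected ∧ G.edgeSet.ncard = Nat.card V + 1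

namespace BicT

/-- In a tree there is an automorphism invariant nonempty clique (the centre). -/
lemma dist_iso {V : Type} {T : SimpleGraph V} (hT : T.Connected) (φ : T ≃g T) (u v : V) :
    T.dist (φ u) (φ v) = T.dist u v := by
  have key : ∀ (ψ : T ≃g T) (a b : V), T.dist (ψ a) (ψ b) ≤ T.dist a b := by
    intro ψ a b
    obtain ⟨p, hp⟩ := hT.exists_walk_length_eq_dist a b
    rw [← hp, ← SimpleGraph.Walk.length_map (f := ψ.toHom) (p := p)]
    exact SimpleGraph.dist_le _
  apply le_antisymm (key φ u v)
  have := key φ.symm (φ u) (φ v)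
  simpa using this

lemma sep {V : Type} {T : SimpleGraph V} (hT : T.IsTree) {u v w x : V}
    (p : T.Walk u v) (hp : p.IsPath) (hw : w ∈ p.support) (hwu : w ≠ u) (hwv : w ≠ v) :
    T.dist w x < T.dist u x ∨ T.dist w x < T.dist v x := by
  classical
  obtain ⟨q, hq⟩ := hT.connected.exists_walk_length_eq_dist u x
  obtain ⟨r, hr⟩ := hT.connected.exists_walk_length_eq_dist v x
  have h1 : w ∈ (q.append r.reverse).support := by
    apply SimpleGraph.Walk.support_bypass_subset_support
    have := hT.existsUnique_path u v |>.unique hp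
      (SimpleGraph.Walk.bypass_isPath (q.append r.reverse))
    rwa [← this]
  have aux : ∀ {a : V} (q : T.Walk a x), w ≠ a → w ∈ q.support → T.dist w x < q.length := by
    intro a q ha hw
    have h2 := congrArg SimpleGraph.Walk.length (q.take_spec hw)
    rw [SimpleGraph.Walk.length_append] at h2
    have h3 : (q.takeUntil w hw).length ≠ 0 := fun h =>
      ha (SimpleGraph.Walk.eq_of_length_eq_zero h).symm
    have := SimpleGraph.dist_le (q.dropUntil w hw)
    omega
  rw [SimpleGraph.Walk.mem_support_append_iff, SimpleGraph.Walk.support_reverse,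
    List.mem_reverse] at h1
  rcases h1 with h1 | h1
  · left; rw [← hq]; exact aux q hwu h1
  · right; rw [← hr]; exact aux r hwv h1

lemma exists_center {V : Type} [Fintype V] (T : SimpleGraph V) (hT : T.IsTree) :
    ∃ S : Set V, S.Nonempty ∧ T.IsClique S ∧ ∀ (φ : T ≃g T) (v : V), φ v ∈ S ↔ v ∈ S := by
  classical
  have := hT.connected.nonempty
  let ecc : V → ℕ := fun v => Finset.univ.sup (fun x => T.dist v x)
  have hecc : ∀ (φ : T ≃g T) v, ecc (φ v) = ecc v := by
    intro φ v
    have key : ∀ (ψ : T ≃g T) a, ecc (ψ a) ≤ ecc a := by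
      intro ψ a
      apply Finset.sup_le
      intro x _
      have h := dist_iso hT.connected ψ a (ψ.symm x)
      rw [RelIso.apply_symm_apply] at h
      rw [h]
      exact Finset.le_sup (f := fun x => T.dist a x) (Finset.mem_univ _)
    apply le_antisymm (key φ v)
    have := key φ.symm (φ v)
    simpa using this
  obtain ⟨c, hc⟩ := Finite.exists_min ecc
  refine ⟨{v | ∀ u, ecc v ≤ ecc u}, ⟨c, hc⟩, ?_, ?_⟩
  · intro u hu v hv huv
    by_contra hadj
    obtain ⟨p, hp⟩ := (hT.existsUnique_path u v).exists
    obtain ⟨w, hw, hwu, hwv⟩ : ∃ w, w ∈ p.support ∧ w ≠ u ∧ w ≠ v := by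
      cases p with
      | nil => exact absurd rfl huv
      | cons h q =>
        rename_i w
        refine ⟨w, by simp, h.ne', ?_⟩
        rintro rfl
        exact hadj h
    have h1 : ecc u = ecc v := le_antisymm (hu v) (hv u)
    have hle : ∀ a x, T.dist a x ≤ ecc a := fun a x =>
      Finset.le_sup (f := fun x => T.dist a x) (Finset.mem_univ x)
    have h2 : ecc w < ecc u := by
      have hb : ∀ x, T.dist w x < ecc u := by
        intro x
        have := sep hT (x := x) p hp hw hwu hwv
        have := hle u x
        have := hle v x
        omega
      rw [Finset.sup_lt_iff (lt_of_le_of_lt (Nat.zero_le _) (hb u))]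
      intro x _
      exact hb x
    exact absurd (hu w) (not_le.mpr h2)
  · intro φ v
    simp only [Set.mem_ofPred_eq, hecc]

def gad : SimpleGraph (Fin 5) :=
  SimpleGraph.fromRel (fun i j => (i = 0 ∧ j = 1) ∨ (i = 0 ∧ j = 2) ∨ (i = 0 ∧ j = 3) ∨
    (i = 1 ∧ j = 2) ∨ (i = 1 ∧ j = 3) ∨ (i = 2 ∧ j = 4))

instance : DecidableRel gad.Adj := by unfold gad; infer_instance

lemma gad_card : gad.edgeSet.ncard = 6 := by
  rw [← SimpleGraph.coe_edgeFinset, Set.ncard_coe_finset]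
  decide

lemma gad_conn (i : Fin 5) : gad.Reachable 0 i := by
  have h1 : gad.Adj 0 1 := by decide
  have h2 : gad.Adj 0 2 := by decide
  have h3 : gad.Adj 0 3 := by decide
  have h4 : gad.Adj 2 4 := by decide
  fin_cases i
  · exact SimpleGraph.Reachable.refl _
  · exact h1.reachable
  · exact h2.reachable
  · exact h3.reachable
  · exact h2.reachable.trans h4.reachable

/-- attach the gadget to a tree along a clique -/
def del {V : Type} (T : SimpleGraph V) (S : Set V) : SimpleGraph (V ⊕ Fin 5) where
  Adj
    | .inl u, .inl v => T.Adj u v ∧ ¬ (u ∈ S ∧ v ∈ S)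
    | .inl u, .inr i => u ∈ S ∧ i = 0
    | .inr i, .inl u => u ∈ S ∧ i = 0
    | .inr i, .inr j => gad.Adj i j
  symm := ⟨by
    rintro (u | i) (v | j) h
    · exact ⟨h.1.symm, fun h' => h.2 h'.symm⟩
    · exact h
    · exact h
    · exact SimpleGraph.Adj.symm h⟩
  loopless := ⟨by
    rintro (u | i) h
    · exact h.1.ne rfl
    · exact gad.loopless.irrefl i h⟩

variable {V : Type} {T : SimpleGraph V} {S : Set V}

@[simp] lemma del_ll {u v : V} : (del T S).Adj (.inl u) (.inl v) ↔ T.Adj u v ∧ ¬ (u ∈ S ∧ v ∈ S) :=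
  Iff.rfl
@[simp] lemma del_lr {u : V} {i : Fin 5} : (del T S).Adj (.inl u) (.inr i) ↔ u ∈ S ∧ i = 0 :=
  Iff.rfl
@[simp] lemma del_rl {u : V} {i : Fin 5} : (del T S).Adj (.inr i) (.inl u) ↔ u ∈ S ∧ i = 0 :=
  Iff.rfl
@[simp] lemma del_rr {i j : Fin 5} : (del T S).Adj (.inr i) (.inr j) ↔ gad.Adj i j :=
  Iff.rfl

lemma del_connected (hT : T.Connected) (hS : S.Nonempty) : (del T S).Connected := by
  obtain ⟨s, hs⟩ := hS
  have hr : ∀ i, (del T S).Reachable (.inr 0) (.inr i) := fun i =>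
    (gad_conn i).map (⟨Sum.inr, fun h => h⟩ : gad →g del T S)
  have hl : ∀ v, (del T S).Reachable (.inr 0) (.inl v) := by
    intro v
    obtain ⟨p⟩ := hT.preconnected v s
    induction p with
    | nil => exact SimpleGraph.Adj.reachable (by simp [hs])
    | @cons a b c h q ih =>
      have ih := ih hs
      by_cases hab : a ∈ S ∧ b ∈ S
      · exact SimpleGraph.Adj.reachable (by simp [hab.1])
      · exact ih.trans (SimpleGraph.Adj.reachable (by
          rw [del_ll]; exact ⟨h.symm, fun h' => hab h'.symm⟩))
  have : Nonempty (V ⊕ Fin 5) := ⟨.inr 0⟩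
  refine ⟨fun x y => ?_⟩
  have hx : ∀ x, (del T S).Reachable (.inr 0) x := by
    rintro (v | i)
    · exact hl v
    · exact hr i
  exact (hx x).symm.trans (hx y)

lemma no_tri (hT : T.IsTree) {a b c : V} (h1 : T.Adj a b) (h2 : T.Adj b c) (h3 : T.Adj a c) :
    False := by
  classical
  exact hT.isAcyclic.cliqueFree le_rfl {a, b, c} (SimpleGraph.is3Clique_triple_iff.2 ⟨h1, h3, h2⟩)

lemma edge_aux [Fintype V] (hT : T.IsTree) (hS : S.Nonempty) (hc : T.IsClique S) :
    (T.edgeSet \ {e | ∀ x ∈ e, x ∈ S}).ncard + S.ncard = Nat.card V := by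
  have hcard : T.edgeSet.ncard + 1 = Nat.card V := by
    have := (SimpleGraph.isTree_iff_connected_and_card.1 hT).2
    rwa [Nat.card_coe_set_eq] at this
  obtain ⟨a, ha⟩ := hS
  by_cases hsub : S = {a}
  · subst hsub
    rw [Set.ncard_singleton, ← hcard]
    congr 2
    ext e
    induction e with | _ x y
    simp only [Set.mem_sdiff, SimpleGraph.mem_edgeSet, Set.mem_ofPred_eq, Sym2.mem_iff,
      Set.mem_singleton_iff, and_iff_left_iff_imp]
    intro h h'
    exact h.ne ((h' x (.inl rfl)).trans (h' y (.inr rfl)).symm)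
  · obtain ⟨b, hb, hab⟩ : ∃ b ∈ S, b ≠ a := by
      by_contra! h
      exact hsub (Set.eq_singleton_iff_unique_mem.2 ⟨ha, h⟩)
    have hadj : T.Adj a b := hc ha hb hab.symm
    have hS : S = {a, b} := by
      ext x
      simp only [Set.mem_insert_iff, Set.mem_singleton_iff]
      constructor
      · intro hx
        by_contra! h
        exact no_tri hT hadj (hc hb hx h.2.symm) (hc ha hx h.1.symm)
      · rintro (rfl | rfl) <;> assumption
    have h1 : T.edgeSet \ {e | ∀ x ∈ e, x ∈ S} = T.edgeSet \ {s(a, b)} := by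
      ext e
      induction e with | _ x y
      simp only [Set.mem_sdiff, SimpleGraph.mem_edgeSet, Set.mem_ofPred_eq, Sym2.mem_iff,
        Set.mem_singleton_iff, and_congr_right_iff, hS, Set.mem_insert_iff, Sym2.eq_iff]
      intro h
      have := h.ne
      have := hadj.ne
      apply not_congr
      constructor
      · intro h'
        have h1 := h' x (.inl rfl)
        have h2 := h' y (.inr rfl)
        grind
      · grind
    rw [h1, hS, Set.ncard_pair hab.symm]
    have := Set.ncard_sdiff_singleton_add_one (s := T.edgeSet) (a := s(a,b)) hadj (Set.toFinite _)
    omega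

lemma del_card [Fintype V] (hT : T.IsTree) (hS : S.Nonempty) (hc : T.IsClique S) :
    (del T S).edgeSet.ncard = Nat.card (V ⊕ Fin 5) + 1 := by
  have h : (del T S).edgeSet = (Sym2.map Sum.inl '' (T.edgeSet \ {e | ∀ x ∈ e, x ∈ S})) ∪
      ((fun s => s(Sum.inl s, Sum.inr 0)) '' S) ∪ (Sym2.map Sum.inr '' gad.edgeSet) := by
    ext e
    induction e with | _ x y
    simp only [Set.mem_union, Set.mem_image, Sym2.exists, Sym2.map_mk, Set.mem_sdiff,
      SimpleGraph.mem_edgeSet, Set.mem_ofPred_eq, Sym2.mem_iff, Sym2.eq_iff]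
    rcases x with u | i <;> rcases y with v | j
    · simp only [del_ll]
      constructor
      · intro h
        exact .inl (.inl ⟨u, v, ⟨h.1, fun h' => h.2 ⟨h' u (.inl rfl), h' v (.inr rfl)⟩⟩,
          .inl ⟨rfl, rfl⟩⟩)
      · rintro ((⟨a, b, h, h'⟩ | ⟨a, h, h'⟩) | ⟨a, b, h, h'⟩)
        · have h1 := h.1.symm
          grind
        · simp at h'
        · simp at h'
    · simp only [del_lr]
      constructor
      · rintro ⟨h, rfl⟩
        exact .inl (.inr ⟨u, h, .inl ⟨rfl, rfl⟩⟩)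
      · rintro ((⟨a, b, h, h'⟩ | ⟨a, h, h'⟩) | ⟨a, b, h, h'⟩) <;> grind
    · simp only [del_rl]
      constructor
      · rintro ⟨h, rfl⟩
        exact .inl (.inr ⟨v, h, .inr ⟨rfl, rfl⟩⟩)
      · rintro ((⟨a, b, h, h'⟩ | ⟨a, h, h'⟩) | ⟨a, b, h, h'⟩) <;> grind
    · simp only [del_rr]
      constructor
      · intro h
        exact .inr ⟨i, j, h, .inl ⟨rfl, rfl⟩⟩
      · rintro ((⟨a, b, h, h'⟩ | ⟨a, h, h'⟩) | ⟨a, b, h, h'⟩)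
        · simp at h'
        · simp at h'
        · have h1 := h.symm
          grind
  rw [h, Set.ncard_union_eq, Set.ncard_union_eq, Set.ncard_image_of_injective, 
    Set.ncard_image_of_injective, Set.ncard_image_of_injective, gad_card, edge_aux hT hS hc]
  · simp
  · exact Sym2.map.injective Sum.inr_injective
  · intro a b h
    simpa using h
  · exact Sym2.map.injective Sum.inl_injective
  · rw [Set.disjoint_left]
    rintro _ ⟨e, _, rfl⟩ ⟨s, _, h⟩
    induction e with | _ x y
    simp at h
  · rw [Set.disjoint_left]
    rintro _ (⟨e, _, rfl⟩ | ⟨s, _, rfl⟩) ⟨e', _, h⟩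
    · induction e with | _ x y
      induction e' with | _ x y
      simp at h
    · induction e' with | _ x y
      simp at h

lemma del_bicyclic [Fintype V] (hT : T.IsTree) (hS : S.Nonempty) (hc : T.IsClique S) :
    (del T S).IsBicyclic := ⟨del_connected hT.connected hS, del_card hT hS hc⟩

/-- the setwise stabilizer -/
def stab (T : SimpleGraph V) (S : Set V) : Subgroup (T ≃g T) where
  carrier := {φ | ∀ v, φ v ∈ S ↔ v ∈ S}
  mul_mem' := by
    intro a b ha hb v
    exact (ha _).trans (hb v)
  one_mem' := fun v => Iff.rfl
  inv_mem' := by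
    intro a ha v
    have := ha (a⁻¹ v)
    rw [RelIso.apply_inv_self] at this
    exact this.symm

lemma mem_stab {φ : T ≃g T} : φ ∈ stab T S ↔ ∀ v, φ v ∈ S ↔ v ∈ S := Iff.rfl

lemma gad2 : ∀ x y a b : Fin 5, gad.Adj x y → a ≠ b → gad.Adj x a → gad.Adj y a → gad.Adj x b →
    gad.Adj y b → ((x = 0 ∧ y = 1) ∨ (x = 1 ∧ y = 0)) ∧ ((a = 2 ∧ b = 3) ∨ (a = 3 ∧ b = 2)) := by
  decide

lemma tri (hT : T.IsTree) {x y z : V ⊕ Fin 5} (h1 : (del T S).Adj x y) (h2 : (del T S).Adj y z)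
    (h3 : (del T S).Adj x z) (hc : T.IsClique S) : ∃ i, x = .inr i := by
  rcases x with a | a
  · exfalso
    rcases y with b | b <;> rcases z with c | c
    · exact no_tri hT h1.1 h2.1 h3.1
    · rw [del_ll] at h1; rw [del_lr] at h2 h3; tauto
    · rw [del_lr] at h1; rw [del_rl] at h2; rw [del_ll] at h3; tauto
    · rw [del_lr] at h1 h3; rw [del_rr] at h2
      rw [h1.2, h3.2] at h2
      exact h2.ne rfl
  · exact ⟨a, rfl⟩

lemma fixes (hT : T.IsTree) (hS : S.Nonempty) (hc : T.IsClique S) (φ : del T S ≃g del T S) :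
    ∀ i, φ (.inr i) = .inr i := by
  have adj : ∀ {x y}, (del T S).Adj x y → (del T S).Adj (φ x) (φ y) := fun h => φ.map_adj_iff.2 h
  have g : ∀ {i j}, gad.Adj i j → (del T S).Adj (φ (.inr i)) (φ (.inr j)) := fun h => adj h
  have h01 := g (show gad.Adj 0 1 by decide)
  have h02 := g (show gad.Adj 0 2 by decide)
  have h03 := g (show gad.Adj 0 3 by decide)
  have h12 := g (show gad.Adj 1 2 by decide)
  have h13 := g (show gad.Adj 1 3 by decide)
  have h24 := g (show gad.Adj 2 4 by decide)
  obtain ⟨p, hp⟩ := tri hT h01 h12 h02 hc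
  obtain ⟨q, hq⟩ := tri hT h01.symm h02 h12 hc
  obtain ⟨r, hr⟩ := tri hT h02.symm h01 h12.symm hc
  obtain ⟨s, hs⟩ := tri hT h03.symm h01 h13.symm hc
  have inj : ∀ {i j : Fin 5}, φ (.inr i) = φ (.inr j) → i = j := fun h =>
    Sum.inr_injective (φ.injective h)
  have hrs : r ≠ s := by
    rintro rfl
    exact absurd (inj (hr.trans hs.symm)) (by decide)
  rw [hp, hq, del_rr] at h01
  rw [hp, hr, del_rr] at h02
  rw [hp, hs, del_rr] at h03
  rw [hq, hr, del_rr] at h12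
  rw [hq, hs, del_rr] at h13
  obtain ⟨h1, h2⟩ := gad2 p q r s h01 hrs h02 h12 h03 h13
  -- the images of 0,1
  have n4 : ∀ {i : Fin 5} {k}, φ (.inr i) = k → i ≠ 4 → φ (.inr 4) ≠ k := by
    intro i k h hi h'
    exact hi (inj (h.trans h'.symm))
  have p4 := n4 hp (by decide)
  have q4 := n4 hq (by decide)
  rw [hr] at h24
  have n3 : ∀ j, gad.Adj 3 j → j = 0 ∨ j = 1 := by decide
  have n2 : ∀ j, gad.Adj 2 j → j = 0 ∨ j = 1 ∨ j = 4 := by decide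
  have n1 : ∀ j, gad.Adj 1 j → j = 0 ∨ j = 2 ∨ j = 3 := by decide
  have hr4 : r = 2 ∧ s = 3 ∧ φ (.inr 4) = .inr 4 := by
    rcases hx : φ (.inr 4) with v | j
    · rw [hx, del_rl] at h24
      have := h24.2
      rcases h2 with h2 | h2 <;> rw [h2.1] at this <;> exact absurd this (by decide)
    · rw [hx, del_rr] at h24
      rw [hx] at p4 q4
      rcases h2 with ⟨rfl, rfl⟩ | ⟨rfl, rfl⟩
      · refine ⟨rfl, rfl, ?_⟩
        rcases n2 j h24 with rfl | rfl | rfl <;> rcases h1 with ⟨rfl, rfl⟩ | ⟨rfl, rfl⟩ <;> simp_all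
      · exfalso
        rcases n3 j h24 with rfl | rfl <;> rcases h1 with ⟨rfl, rfl⟩ | ⟨rfl, rfl⟩ <;> simp_all
  obtain ⟨rfl, rfl, h4⟩ := hr4
  have hpq : p = 0 ∧ q = 1 := by
    rcases h1 with h1 | ⟨rfl, rfl⟩
    · exact h1
    · exfalso
      obtain ⟨v, hv⟩ := hS
      have hv0 := adj (show (del T S).Adj (.inr 0) (.inl v) from ⟨hv, rfl⟩)
      rw [hp] at hv0
      have ne : ∀ {i k}, φ (.inr i) = k → φ (.inl v) ≠ k := by
        intro i k h h'
        have := φ.injective (h.trans h'.symm)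
        simp at this
      rcases hx : φ (.inl v) with w | j
      · rw [hx, del_rl] at hv0
        exact absurd hv0.2 (by decide)
      · rw [hx, del_rr] at hv0
        rcases n1 j hv0 with rfl | rfl | rfl
        · exact ne hq hx
        · exact ne hr hx
        · exact ne hs hx
  obtain ⟨rfl, rfl⟩ := hpq
  intro i
  fin_cases i <;> assumption

def ext (hc : T.IsClique S) (ψ : stab T S) : del T S ≃g del T S where
  toEquiv := Equiv.sumCongr ψ.1.toEquiv (Equiv.refl _)
  map_rel_iff' := by
    have h := mem_stab.1 ψ.2
    have h' : ∀ {u v}, T.Adj (ψ.1 u) (ψ.1 v) ↔ T.Adj u v := ψ.1.map_adj_iff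
    rintro (u | i) (v | j)
    · change (T.Adj (ψ.1 u) (ψ.1 v) ∧ ¬ (ψ.1 u ∈ S ∧ ψ.1 v ∈ S)) ↔ _
      rw [h, h, h', del_ll]
    · change (ψ.1 u ∈ S ∧ j = 0) ↔ _
      rw [h, del_lr]
    · change (ψ.1 v ∈ S ∧ i = 0) ↔ _
      rw [h, del_rl]
    · rfl

theorem stab_iso (hT : T.IsTree) (hS : S.Nonempty) (hc : T.IsClique S) :
    Nonempty (stab T S ≃* (del T S ≃g del T S)) := by
  let f : stab T S →* (del T S ≃g del T S) :=
    { toFun := ext hc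
      map_one' := by
        apply RelIso.ext; rintro (u | i) <;> rfl
      map_mul' := by
        intro a b
        apply RelIso.ext; rintro (u | i) <;> rfl }
  refine ⟨MulEquiv.ofBijective f ⟨?_, ?_⟩⟩
  · intro a b h
    apply Subtype.ext
    apply RelIso.ext
    intro u
    have := congrArg (fun φ : del T S ≃g del T S => φ (.inl u)) h
    exact Sum.inl_injective this
  · intro φ
    have key : ∀ (φ : del T S ≃g del T S), ∀ u, ∃ v, φ (.inl u) = .inl v := by
      intro φ u
      rcases h : φ (.inl u) with v | i
      · exact ⟨v, rfl⟩
      · have := φ.injective (h.trans (fixes hT hS hc φ i).symm)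
        simp at this
    choose a ha using key φ
    choose b hb using key φ.symm
    have hba : ∀ u, b (a u) = u := by
      intro u
      apply Sum.inl_injective (β := Fin 5)
      rw [← hb, ← ha, RelIso.symm_apply_apply]
    have hab : ∀ u, a (b u) = u := by
      intro u
      apply Sum.inl_injective (β := Fin 5)
      rw [← ha, ← hb, RelIso.apply_symm_apply]
    have h0 := fixes hT hS hc φ 0
    have haS : ∀ v, a v ∈ S ↔ v ∈ S := by
      intro v
      have := φ.map_adj_iff (v := .inl v) (w := .inr 0)
      rw [ha, h0] at this
      simpa using this
    have hadj : ∀ u v, T.Adj (a u) (a v) ↔ T.Adj u v := by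
      intro u v
      have := φ.map_adj_iff (v := .inl u) (w := .inl v)
      rw [ha, ha, del_ll, del_ll, haS, haS] at this
      by_cases h : u ∈ S ∧ v ∈ S
      · by_cases huv : u = v
        · subst huv; simp
        · have : a u ≠ a v := fun h => huv (by rw [← hba u, h, hba])
          exact iff_of_true (hc ((haS u).2 h.1) ((haS v).2 h.2) this) (hc h.1 h.2 huv)
      · simpa [h] using this
    refine ⟨⟨⟨⟨a, b, hba, hab⟩, by intro u v; exact hadj u v⟩, haS⟩, ?_⟩
    apply RelIso.ext
    rintro (u | i)
    · exact (ha u).symm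
    · exact (fixes hT hS hc φ i).symm

end BicT

namespace BicF

/-- the parent relation -/
def R {F : Type} (p : F → Option F) (x y : F) : Prop := p x = some y

variable {F : Type} {p : F → Option F}

lemma par (φ : R p ≃r R p) (x : F) : p (φ x) = (p x).map φ := by
  rcases h : p x with _ | y
  · rcases h' : p (φ x) with _ | z
    · rfl
    · have : R p x (φ.symm z) := by
        rw [← φ.map_rel_iff, RelIso.apply_symm_apply]; exact h'
      rw [R, h] at this
      simp at this
  · exact φ.map_rel_iff.2 (show R p x y from h)

lemma par_symm {φ : Equiv.Perm F} (h : ∀ x, p (φ x) = (p x).map φ) (x y : F) :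
    R p (φ x) (φ y) ↔ R p x y := by
  rw [R, R, h]
  rcases p x with _ | z
  · simp
  · simp

/-- automorphism from a parent preserving permutation -/
def mk (φ : Equiv.Perm F) (h : ∀ x, p (φ x) = (p x).map φ) : R p ≃r R p :=
  ⟨φ, by intro x y; exact par_symm h x y⟩

/-- class of groups realised by forests -/
def Real (G : Type) [Group G] : Prop :=
  ∃ (F : Type) (_ : Fintype F) (p : F → Option F) (h : F → ℕ),
    (∀ x y, p x = some y → h y < h x) ∧ Nonempty (G ≃* (R p ≃r R p))

lemma real_triv : Real PUnit := by
  refine ⟨Empty, inferInstance, fun x => x.elim, fun x => x.elim, fun x => x.elim, ⟨?_⟩⟩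
  have : Subsingleton (R (fun x : Empty => (x.elim : Option Empty)) ≃r
      R (fun x : Empty => (x.elim : Option Empty))) :=
    ⟨fun a b => RelIso.ext fun x => x.elim⟩
  exact
    { toFun := fun _ => 1
      invFun := fun _ => 1
      left_inv := fun _ => rfl
      right_inv := fun _ => Subsingleton.elim _ _
      map_mul' := fun _ _ => Subsingleton.elim _ _ }

/-! wreath products -/

def wp (ι : Type) (p : F → Option F) : ι × Option F → Option (ι × Option F)
  | (_, none) => none
  | (i, some v) => some (i, p v)

lemma option_ind {h : F → ℕ} (hp : ∀ x y, p x = some y → h y < h x)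
    {P : Option F → Prop} (h0 : P none) (h1 : ∀ v, P (p v) → P (some v)) : ∀ x, P x := by
  have : ∀ n v, h v ≤ n → P (some v) := by
    intro n
    induction n with
    | zero =>
      intro v hv
      apply h1
      rcases hx : p v with _ | y
      · exact h0
      · have := hp v y hx; omega
    | succ n ih =>
      intro v hv
      apply h1
      rcases hx : p v with _ | y
      · exact h0
      · have := hp v y hx; exact ih y (by omega)
  rintro (_ | v)
  · exact h0
  · exact this _ v le_rfl

def wmap {ι : Type} (g : (ι → (R p ≃r R p)) ⋊[permHom ι (R p ≃r R p)] Equiv.Perm ι) :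
    Equiv.Perm (ι × Option F) where
  toFun x := (g.right x.1, x.2.map (g.left (g.right x.1)))
  invFun x := (g.right.symm x.1, x.2.map (g.left x.1).symm)
  left_inv := by
    rintro ⟨i, _ | v⟩ <;> simp
  right_inv := by
    rintro ⟨i, _ | v⟩ <;> simp

lemma wmap_apply {ι : Type} (g : (ι → (R p ≃r R p)) ⋊[permHom ι (R p ≃r R p)] Equiv.Perm ι) 
    (i : ι) (x : Option F) :
    wmap g (i, x) = (g.right i, x.map (g.left (g.right i))) := rfl

def whom (ι : Type) : ((ι → (R p ≃r R p)) ⋊[permHom ι (R p ≃r R p)] Equiv.Perm ι) →*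
    (R (wp ι p) ≃r R (wp ι p)) where
  toFun g := mk (wmap g) (by
    rintro ⟨i, _ | v⟩
    · rfl
    · simp only [wmap_apply, Option.map_some, wp, par])
  map_one' := by
    apply RelIso.ext
    rintro ⟨i, _ | v⟩ <;> rfl
  map_mul' := by
    intro a b
    apply RelIso.ext
    rintro ⟨i, _ | v⟩
    · rfl
    · change wmap (a * b) (i, some v) = wmap a (wmap b (i, some v))
      simp only [wmap_apply, SemidirectProduct.mul_right, SemidirectProduct.mul_left,
        Option.map_some, Pi.mul_apply]
      simp [permHom, permAut]

lemma whom_apply {ι : Type} (g : (ι → (R p ≃r R p)) ⋊[permHom ι (R p ≃r R p)] Equiv.Perm ι) 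
    (i : ι) (x : Option F) :
    whom ι g (i, x) = (g.right i, x.map (g.left (g.right i))) := rfl

lemma whom_inj (ι : Type) : Function.Injective (whom (p := p) ι) := by
  intro a b hab
  have h : ∀ i x, whom ι a (i, x) = whom ι b (i, x) := by intro i x; rw [hab]
  have h1 : a.right = b.right := by
    ext i
    have := h i none
    rw [whom_apply, whom_apply] at this
    exact congrArg Prod.fst this
  apply SemidirectProduct.ext _ h1
  funext i
  apply RelIso.ext
  intro v
  have := h (a.right.symm i) (some v)
  rw [whom_apply, whom_apply, ← h1] at this
  simpa using this

lemma whom_surj {ι : Type} [Finite ι] [Finite F] {h : F → ℕ}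
    (hp : ∀ x y, p x = some y → h y < h x) : Function.Surjective (whom (p := p) ι) := by
  intro φ
  have hroot : ∀ i, (φ (i, none)).2 = none := by
    intro i
    have := par φ (i, none)
    rcases hx : φ (i, none) with ⟨j, _ | v⟩
    · rfl
    · rw [hx] at this
      simp [wp] at this
  let σ : ι → ι := fun i => (φ (i, none)).1
  have hσ : ∀ i, φ (i, none) = (σ i, none) := fun i => Prod.ext rfl (hroot i)
  have hσinj : Function.Injective σ := by
    intro i j hij
    have := (hσ i).trans ((congrArg (fun k => (k, (none : Option F))) hij).trans (hσ j).symm)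
    exact congrArg Prod.fst (φ.injective this)
  have hcomp : ∀ i x, (φ (i, x)).1 = σ i := by
    intro i
    refine option_ind (P := fun x => (φ (i, x)).1 = σ i) hp ?_ ?_
    · rfl
    · intro v ih
      have := par φ (i, some v)
      rcases hx : φ (i, some v) with ⟨j, _ | w⟩
      · rw [hx] at this; simp [wp] at this
      · rw [hx] at this
        simp only [wp, Option.map_some, Option.some.injEq] at this
        rw [← ih, ← this]
  have hsome : ∀ i v, ∃ w, φ (i, some v) = (σ i, some w) := by
    intro i v
    have h1 := par φ (i, some v)
    have h2 := hcomp i (some v)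
    rcases hx : φ (i, some v) with ⟨j, _ | w⟩
    · rw [hx] at h1; simp [wp] at h1
    · rw [hx] at h2
      exact ⟨w, by rw [← h2]⟩
  choose f hf using hsome
  have hfinj : ∀ i, Function.Injective (f i) := by
    intro i u v huv
    have := φ.injective ((hf i u).trans (huv ▸ (hf i v).symm))
    simpa using this
  have hmap : ∀ i x, φ (i, x) = (σ i, x.map (f i)) := by
    rintro i (_ | v)
    · exact hσ i
    · exact hf i v
  have hfp : ∀ i v, p (f i v) = (p v).map (f i) := by
    intro i v
    have h1 := par φ (i, some v)
    rw [hf] at h1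
    simp only [wp, Option.map_some, Option.some.injEq, hmap, Prod.mk.injEq, true_and] at h1
    exact h1
  let σ' : Equiv.Perm ι := Equiv.ofBijective σ (Finite.injective_iff_bijective.1 hσinj)
  let f' : ι → (R p ≃r R p) := fun i =>
    mk (Equiv.ofBijective (f i) (Finite.injective_iff_bijective.1 (hfinj i))) (hfp i)
  refine ⟨⟨fun i => f' (σ'.symm i), σ'⟩, ?_⟩
  apply RelIso.ext
  rintro ⟨i, x⟩
  rw [whom_apply, hmap]
  simp only [Equiv.symm_apply_apply]
  rfl

def wcongr {ι G H : Type} [Group G] [Group H] (e : G ≃* H) :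
    ((ι → G) ⋊[permHom ι G] Equiv.Perm ι) ≃* ((ι → H) ⋊[permHom ι H] Equiv.Perm ι) where
  toFun g := ⟨fun i => e (g.left i), g.right⟩
  invFun g := ⟨fun i => e.symm (g.left i), g.right⟩
  left_inv g := by apply SemidirectProduct.ext <;> simp
  right_inv g := by apply SemidirectProduct.ext <;> simp
  map_mul' a b := by
    apply SemidirectProduct.ext
    · funext i
      change e (a.left i * b.left (a.right.symm i)) = e (a.left i) * e (b.left (a.right.symm i))
      exact map_mul e _ _
    · rfl

lemma real_wreath {G : Type} [Group G] (n : ℕ) (hG : Real G) :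
    Real ((Fin n → G) ⋊[permHom (Fin n) G] Equiv.Perm (Fin n)) := by
  obtain ⟨F, hF, p, h, hp, ⟨e⟩⟩ := hG
  refine ⟨Fin n × Option F, inferInstance, wp (Fin n) p,
    fun x => x.2.elim 0 (fun v => h v + 1), ?_, 
    ⟨(wcongr e).trans (MulEquiv.ofBijective (whom (Fin n)) ⟨whom_inj _, whom_surj hp⟩)⟩⟩
  rintro ⟨i, _ | v⟩ y hy
  · simp [wp] at hy
  · simp only [wp, Option.some.injEq] at hy
    subst hy
    rcases hx : p v with _ | w
    · simp
    · simpa using hp v w hx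

/-! products -/

def pp {E : Type} (q : E → Option E) (p : F → Option F) : E ⊕ Option F → Option (E ⊕ Option F)
  | .inl x => (q x).map .inl
  | .inr none => none
  | .inr (some v) => some (.inr (p v))

variable {E : Type} {q : E → Option E}

def phom (q : E → Option E) (p : F → Option F) :
    (R q ≃r R q) × (R p ≃r R p) →* (R (pp q p) ≃r R (pp q p)) where
  toFun g := mk (Equiv.sumCongr g.1.toEquiv (Equiv.optionCongr g.2.toEquiv)) (by
    rintro (x | _ | v)
    · change (q (g.1 x)).map Sum.inl = ((q x).map Sum.inl).map _
      rw [par (p := q) g.1 x]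
      rcases q x with _ | y <;> rfl
    · rfl
    · change some (Sum.inr (p (g.2 v))) = some (Sum.inr ((p v).map g.2))
      rw [par (p := p) g.2 v])
  map_one' := by
    apply RelIso.ext
    rintro (x | _ | v) <;> rfl
  map_mul' := by
    intro a b
    apply RelIso.ext
    rintro (x | _ | v) <;> rfl

lemma phom_inj : Function.Injective (phom q p) := by
  intro a b hab
  have h : ∀ x, phom q p a x = phom q p b x := by intro x; rw [hab]
  apply Prod.ext
  · apply RelIso.ext
    intro x
    exact Sum.inl_injective (h (.inl x))
  · apply RelIso.ext
    intro v
    exact Option.some_injective _ (Sum.inr_injective (h (.inr (some v))))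

lemma phom_surj [Fintype E] [Fintype F] {h : F → ℕ}
    (hp : ∀ x y, p x = some y → h y < h x) (hcard : Fintype.card E ≤ Fintype.card F) :
    Function.Surjective (phom q p) := by
  intro φ
  have h0 : φ (.inr none) = .inr none := by
    rcases hx : φ (.inr none) with x | _ | v
    · exfalso
      have key : ∀ y : Option F, ∃ x, φ (.inr y) = .inl x := by
        refine option_ind (P := fun y => ∃ x, φ (.inr y) = .inl x) hp ?_ ?_
        · exact ⟨x, hx⟩
        · rintro v ⟨x, ih⟩
          have h1 := par φ (.inr (some v))
          rcases hz : φ (.inr (some v)) with z | _ | w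
          · exact ⟨z, rfl⟩
          · rw [hz] at h1; simp [pp] at h1
          · rw [hz] at h1; simp [pp, ih] at h1
      choose f hf using key
      have hfinj : Function.Injective f := by
        intro u v huv
        exact Sum.inr_injective (φ.injective ((hf u).trans (huv ▸ (hf v).symm)))
      have := Fintype.card_le_of_injective f hfinj
      rw [Fintype.card_option] at this
      omega
    · rfl
    · have h1 := par φ (.inr none)
      rw [hx] at h1; simp [pp] at h1
  have key : ∀ y : Option F, ∃ x, φ (.inr y) = .inr x := by
    refine option_ind (P := fun y => ∃ x, φ (.inr y) = .inr x) hp ?_ ?_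
    · exact ⟨none, h0⟩
    · rintro v ⟨x, ih⟩
      have h1 := par φ (.inr (some v))
      rcases hz : φ (.inr (some v)) with z | w
      · rw [hz] at h1
        rcases hq : q z with _ | z' <;> simp [pp, ih, hq] at h1
      · exact ⟨w, rfl⟩
  have key2 : ∀ v : F, ∃ w, φ (.inr (some v)) = .inr (some w) := by
    intro v
    obtain ⟨x, hx⟩ := key (some v)
    rcases x with _ | w
    · have := φ.injective (hx.trans h0.symm)
      simp at this
    · exact ⟨w, hx⟩
  choose f hf using key2
  have hfinj : Function.Injective f := by
    intro u v huv
    have := φ.injective ((hf u).trans (huv ▸ (hf v).symm))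
    simpa using this
  have hfbij := Finite.injective_iff_bijective.1 hfinj
  have key3 : ∀ x : E, ∃ y, φ (.inl x) = .inl y := by
    intro x
    rcases hz : φ (.inl x) with z | _ | w
    · exact ⟨z, rfl⟩
    · have := φ.injective (hz.trans h0.symm)
      simp at this
    · obtain ⟨v, rfl⟩ := hfbij.2 w
      have := φ.injective (hz.trans (hf v).symm)
      simp at this
  choose g hg using key3
  have hginj : Function.Injective g := by
    intro u v huv
    have := φ.injective ((hg u).trans (huv ▸ (hg v).symm))
    simpa using this
  have hgbij := Finite.injective_iff_bijective.1 hginj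
  have hfp : ∀ v, p (f v) = (p v).map f := by
    intro v
    have h1 := par φ (.inr (some v))
    rw [hf] at h1
    rcases hx : p v with _ | w
    · simp [pp, hx, h0] at h1
      simpa using h1
    · simp [pp, hx, hf] at h1
      simpa using h1
  have hgp : ∀ v, q (g v) = (q v).map g := by
    intro v
    have h1 := par φ (.inl v)
    rw [hg] at h1
    rcases hx : q v with _ | w
    · simp [pp, hx] at h1
      simpa using h1
    · simp [pp, hx, hg] at h1
      simpa using h1
  refine ⟨(mk (Equiv.ofBijective g hgbij) hgp, mk (Equiv.ofBijective f hfbij) hfp), ?_⟩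
  apply RelIso.ext
  rintro (x | _ | v)
  · exact (hg x).symm
  · exact h0.symm
  · exact (hf v).symm

lemma real_prod {G H : Type} [Group G] [Group H] (hG : Real G) (hH : Real H) : Real (G × H) := by
  obtain ⟨E, hE, q, k, hq, ⟨d⟩⟩ := hG
  obtain ⟨F, hF, p, h, hp, ⟨e⟩⟩ := hH
  have aux : ∀ {E F : Type} {q : E → Option E} {p : F → Option F} {k : E → ℕ} {h : F → ℕ}, 
      (∀ x y, q x = some y → k y < k x) → (∀ x y, p x = some y → h y < h x) → 
      ∃ l : E ⊕ Option F → ℕ, ∀ x y, pp q p x = some y → l y < l x := by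
    intro E F q p k h hq hp
    refine ⟨Sum.elim k (fun y => y.elim 0 (fun v => h v + 1)), ?_⟩
    rintro (x | _ | v) y hy
    · rcases hx : q x with _ | w
      · simp [pp, hx] at hy
      · simp [pp, hx] at hy
        subst hy
        exact hq x w hx
    · simp [pp] at hy
    · simp only [pp, Option.some.injEq] at hy
      subst hy
      rcases hx : p v with _ | w
      · simp
      · simpa using hp v w hx
  rcases le_total (Fintype.card E) (Fintype.card F) with hc | hc
  · obtain ⟨l, hl⟩ := aux hq hp
    exact ⟨E ⊕ Option F, inferInstance, pp q p, l, hl,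
      ⟨(d.prodCongr e).trans (MulEquiv.ofBijective (phom q p) ⟨phom_inj, phom_surj hp hc⟩)⟩⟩
  · obtain ⟨l, hl⟩ := aux hp hq
    exact ⟨F ⊕ Option E, inferInstance, pp p q, l, hl,
      ⟨(MulEquiv.prodComm.trans (e.prodCongr d)).trans
        (MulEquiv.ofBijective (phom p q) ⟨phom_inj, phom_surj hq hc⟩)⟩⟩

lemma real_of_jordan {G : Type} [Group G] (hG : JordanT G) : Real G := by
  induction hG with
  | triv => exact real_triv
  | congr _ e ih =>
    obtain ⟨F, hF, p, h, hp, ⟨d⟩⟩ := ih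
    exact ⟨F, hF, p, h, hp, ⟨e.symm.trans d⟩⟩
  | prod _ _ ih1 ih2 => exact real_prod ih1 ih2
  | wreath n _ _ ih => exact real_wreath n ih

/-! from forests to trees -/

def tree (p : F → Option F) (h : F → ℕ) (hp : ∀ x y, p x = some y → h y < h x) :
    SimpleGraph (Option F) where
  Adj x y := (∃ v, x = some v ∧ y = p v) ∨ (∃ v, y = some v ∧ x = p v)
  symm := ⟨fun _ _ h => h.symm⟩
  loopless := ⟨by
    rintro x (⟨v, h1, h2⟩ | ⟨v, h1, h2⟩) <;>
    · rw [h1] at h2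
      exact lt_irrefl _ (hp v v h2.symm)⟩

variable {h : F → ℕ} {hp : ∀ x y, p x = some y → h y < h x}

lemma tree_adj {x y : Option F} : (tree p h hp).Adj x y ↔
    (∃ v, x = some v ∧ y = p v) ∨ (∃ v, y = some v ∧ x = p v) := Iff.rfl

lemma tree_isTree [Finite F] : (tree p h hp).IsTree := by
  rw [SimpleGraph.isTree_iff_connected_and_card]
  constructor
  · have key : ∀ x, (tree p h hp).Reachable none x := by
      refine option_ind (P := fun x => (tree p h hp).Reachable none x) hp ?_ ?_
      · exact SimpleGraph.Reachable.refl _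
      · intro v ih
        exact ih.trans (SimpleGraph.Adj.reachable (.inr ⟨v, rfl, rfl⟩))
    refine ⟨fun x y => (key x).symm.trans (key y)⟩
  · have hE : (tree p h hp).edgeSet = Set.range (fun v => s(some v, p v)) := by
      ext e
      induction e with | _ x y
      simp only [SimpleGraph.mem_edgeSet, tree_adj, Set.mem_range, Sym2.eq_iff]
      grind
    have hinj : Function.Injective (fun v => s(some v, p v)) := by
      intro v w hvw
      simp only [Sym2.eq_iff, Option.some.injEq] at hvw
      rcases hvw with h1 | ⟨h1, h2⟩
      · exact h1.1
      · have := hp _ _ h2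
        have := hp _ _ h1.symm
        omega
    rw [hE, Nat.card_range_of_injective hinj, Finite.card_option]

def thom (p : F → Option F) (h : F → ℕ) (hp : ∀ x y, p x = some y → h y < h x) :
    (R p ≃r R p) →* BicT.stab (tree p h hp) {none} where
  toFun φ := ⟨⟨Equiv.optionCongr φ.toEquiv, by
    intro x y
    have key : ∀ (φ : R p ≃r R p) (x y), (tree p h hp).Adj x y →
        (tree p h hp).Adj (x.map φ) (y.map φ) := by
      rintro φ x y (⟨v, rfl, rfl⟩ | ⟨v, rfl, rfl⟩)
      · exact .inl ⟨φ v, rfl, (par φ v).symm⟩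
      · exact .inr ⟨φ v, rfl, (par φ v).symm⟩
    constructor
    · intro hxy
      have := key φ.symm _ _ hxy
      have hs : ∀ z : Option F, (Equiv.optionCongr φ.toEquiv z).map φ.symm = z := by
        rintro (_ | z)
        · rfl
        · exact congrArg some (φ.symm_apply_apply z)
      rwa [hs, hs] at this
    · exact key φ x y⟩, by
    rw [BicT.mem_stab]
    rintro (_ | v)
    · exact Iff.rfl
    · exact iff_of_false (Option.some_ne_none _) (Option.some_ne_none _)⟩
  map_one' := by
    apply Subtype.ext
    apply RelIso.ext
    rintro (_ | v) <;> rfl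
  map_mul' := by
    intro a b
    apply Subtype.ext
    apply RelIso.ext
    rintro (_ | v) <;> rfl

lemma thom_bij [Finite F] : Function.Bijective (thom p h hp) := by
  constructor
  · intro a b hab
    apply RelIso.ext
    intro v
    have := congrArg (fun ψ : BicT.stab (tree p h hp) {none} => ψ.1 (some v)) hab
    exact Option.some_injective _ this
  · rintro ⟨ψ, hψ⟩
    rw [BicT.mem_stab] at hψ
    have h0 : ψ none = none := (hψ none).2 rfl
    have h1 : ∀ v, ∃ w, ψ (some v) = some w := by
      intro v
      rcases hx : ψ (some v) with _ | w
      · have := ψ.injective (hx.trans h0.symm)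
        simp at this
      · exact ⟨w, rfl⟩
    choose f hf using h1
    have hinj : Function.Injective f := by
      intro u v huv
      have := ψ.injective ((hf u).trans (huv ▸ (hf v).symm))
      simpa using this
    have key : ∀ x v, x = some v → p (f v) = ψ (p v) := by
      refine option_ind (P := fun x => ∀ v, x = some v → p (f v) = ψ (p v)) hp ?_ ?_
      · intro v hv; simp at hv
      · intro u ih v huv
        obtain rfl : u = v := by simpa using huv
        have hadj : (tree p h hp).Adj (ψ (some u)) (ψ (p u)) :=
          ψ.map_adj_iff.2 (.inl ⟨u, rfl, rfl⟩)
        rw [hf] at hadj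
        rcases hadj with ⟨w, h1, h2⟩ | ⟨w, h1, h2⟩
        · obtain rfl : f u = w := by simpa using h1
          exact h2.symm
        · exfalso
          rcases hx : p u with _ | t
          · rw [hx, h0] at h1
            simp at h1
          · have h3 := ih t hx
            rw [hx, hf] at h1
            obtain rfl : f t = w := by simpa using h1
            rw [← h2, ← hf] at h3
            have h4 := ψ.injective h3
            have := hp _ _ h4.symm
            have := hp _ _ hx
            omega
    have hfp : ∀ v, p (f v) = (p v).map f := by
      intro v
      rw [key _ v rfl]
      rcases p v with _ | w
      · exact h0
      · exact hf w
    refine ⟨mk (Equiv.ofBijective f (Finite.injective_iff_bijective.1 hinj)) hfp, ?_⟩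
    apply Subtype.ext
    apply RelIso.ext
    rintro (_ | v)
    · exact h0.symm
    · exact (hf v).symm

end BicF

/-- For every finite tree `T` there is a bicyclic graph `Δ` with
`Aut(Δ) ≅ Aut(T)`; consequently, every group in Jordan's class `𝒯` is the automorphism
group of a bicyclic graph. -/
theorem tree_aut_realizable_as_aut_bicyclic :
    (∀ (V : Type) [Fintype V] (T : SimpleGraph V), T.IsTree →
      ∃ (W : Type) (_ : Fintype W) (Δ : SimpleGraph W),
        Δ.IsBicyclic ∧ Nonempty ((Δ ≃g Δ) ≃* (T ≃g T))) ∧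
    (∀ (G : Type) [Group G], JordanT G →
      ∃ (W : Type) (_ : Fintype W) (Δ : SimpleGraph W),
        Δ.IsBicyclic ∧ Nonempty (G ≃* (Δ ≃g Δ))) := by
  constructor
  · intro V _ T hT
    obtain ⟨S, hS, hc, hinv⟩ := BicT.exists_center T hT
    obtain ⟨e⟩ := BicT.stab_iso hT hS hc
    refine ⟨V ⊕ Fin 5, inferInstance, BicT.del T S, BicT.del_bicyclic hT hS hc, ⟨?_⟩⟩
    have htop : BicT.stab T S = ⊤ := by
      rw [eq_top_iff]
      intro φ _
      exact hinv φ
    exact e.symm.trans ((MulEquiv.subgroupCongr htop).trans Subgroup.topEquiv)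
  · intro G _ hG
    obtain ⟨F, hF, p, h, hp, ⟨d⟩⟩ := BicF.real_of_jordan hG
    have hT : (BicF.tree p h hp).IsTree := BicF.tree_isTree
    have hS : ({none} : Set (Option F)).Nonempty := Set.singleton_nonempty _
    have hc : (BicF.tree p h hp).IsClique {none} := by simp
    obtain ⟨e⟩ := BicT.stab_iso hT hS hc
    exact ⟨Option F ⊕ Fin 5, inferInstance, BicT.del (BicF.tree p h hp) {none},
      BicT.del_bicyclic hT hS hc,
      ⟨(d.trans (MulEquiv.ofBijective (BicF.thom p h hp) BicF.thom_bij)).trans e⟩⟩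
end
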